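/- arXiv:2006.06581 — 5 statements merged into one kernel-verified Lean document; each statement's English description precedes it below -/
import Mathlib

section
/- Consider sequences h^t ∈ ℝ^n, u^t ∈ ℝ^m, w₁^t ∈ ℝ^p, w₂^t ∈ ℝ^q (t ∈ ℕ) and, for each t, matrices A^t ∈ ℝ^{n×n}, B^t ∈ ℝ^{n×m}, C₁^t ∈ ℝ^{p×n}, D₁^t ∈ ℝ^{p×m}, C₂^t ∈ ℝ^{q×n}, D₂^t ∈ ℝ^{q×m} such that h^{t+1} = A^t h^t + B^t u^t, w₁^t = C₁^t h^t + D₁^t u^t, and w₂^t = C₂^t h^t + D₂^t u^t for all t. Let (h*, u*, w₁*, w₂*) be a fixed point, i.e. for all t: h* = A^t h* + B^t u*, w₁* = C₁^t h* + D₁^t u*, w₂* = C₂^t h* + D₂^t u*. Let M₁^t ∈ ℝ^{p×p} and M₂^t ∈ ℝ^{q×q} be symmetric matrices such that for all t, (w₁^t − w₁*)ᵀ M₁^t (w₁^t − w₁*) ≥ 0 and (w₂^t − w₂*)ᵀ M₂^t (w₂^t − w₂*) ≥ 0. Suppose there exist a symmetric positive definite matrix P ∈ ℝ^{n×n} and,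 for each t, scalars τ_t ∈ [0,1], β₁^t ≥ 0, β₂^t ≥ 0 such that the symmetric (n+m)×(n+m) block matrix [[(A^t)ᵀ P A^t − τ_t² P , (A^t)ᵀ P B^t],[(B^t)ᵀ P A^t , (B^t)ᵀ P B^t]] + [[C₁^t, D₁^t],[C₂^t, D₂^t]]ᵀ · blockdiag(β₁^t M₁^t, β₂^t M₂^t) · [[C₁^t, D₁^t],[C₂^t, D₂^t]] is negative semidefinite. Then for every t, (h^{t+1} − h*)ᵀ P (h^{t+1} − h*) ≤ τ_t² (h^t − h*)ᵀ P (h^t − h*); consequently, if τ* := sup_t τ_t, then for all t ∈ ℕ, ‖h^t − h*‖₂ ≤ √(κ(P)) · (τ*)^t · ‖h^0 − h*‖₂, where κ(P) = λ_max(P)/λ_min(P) is the condition number of P. -/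
open Matrix

/-!
Write `x`, `y`, `z` for the deviations of the state, input and output from the fixed point, and
`V x = xᵀ P x`. Evaluating the matrix inequality at `(x, y)` gives
`V (A x + B y) - τ² V x + β₁ z₁ᵀ M₁ z₁ + β₂ z₂ᵀ M₂ z₂ ≤ 0`, and the last two terms are nonnegative,
so `V` contracts by `τ²` along the trajectory. Since `V` lies between `λ_min(P) ‖·‖²` and
`λ_max(P) ‖·‖²`, passing from the norm to `V` and back costs the factor `√κ(P)`.
-/

section Spectrum

variable {ι : Type*} [Fintype ι] [DecidableEq ι]

theorem spectrum_eq_setOf_exists_mulVec_eq_smul {K : Type*} [Field K] (P : Matrix ι ι K) :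
    spectrum K P = {μ | ∃ v, v ≠ 0 ∧ P *ᵥ v = μ • v} := by
  ext μ
  rw [← spectrum_toLin', ← Module.End.hasEigenvalue_iff_mem_spectrum]
  constructor
  · intro hμ
    obtain ⟨v, hv⟩ := hμ.exists_hasEigenvector
    exact ⟨v, hv.2, hv.apply_eq_smul⟩
  · rintro ⟨v, hv, hPv⟩
    exact Module.End.hasEigenvalue_of_hasEigenvector
      (Module.End.hasEigenvector_iff.2 ⟨Module.End.mem_eigenspace_iff.2 hPv, hv⟩)

open scoped MatrixOrder

variable {P : Matrix ι ι ℝ} {l L : ℝ}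

theorem mul_dotProduct_self_le_dotProduct_mulVec (hP : P.IsHermitian)
    (hl : l ∈ lowerBounds (spectrum ℝ P)) (v : ι → ℝ) : l * (v ⬝ᵥ v) ≤ v ⬝ᵥ P *ᵥ v := by
  have hle : algebraMap ℝ _ l ≤ P := algebraMap_le_of_le_spectrum (fun _ hμ ↦ hl hμ) hP
  simpa [Algebra.algebraMap_eq_smul_one, sub_mulVec, smul_mulVec]
    using (le_iff.1 hle).dotProduct_mulVec_nonneg v

theorem dotProduct_mulVec_le_mul_dotProduct_self (hP : P.IsHermitian)
    (hL : L ∈ upperBounds (spectrum ℝ P)) (v : ι → ℝ) : v ⬝ᵥ P *ᵥ v ≤ L * (v ⬝ᵥ v) := by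
  have hle : P ≤ algebraMap ℝ _ L := le_algebraMap_of_spectrum_le (fun _ hμ ↦ hL hμ) hP
  simpa [Algebra.algebraMap_eq_smul_one, sub_mulVec, smul_mulVec]
    using (le_iff.1 hle).dotProduct_mulVec_nonneg v

theorem sqrt_dotProduct_self_le_of_dotProduct_mulVec_le (hP : P.IsHermitian)
    (hl : l ∈ lowerBounds (spectrum ℝ P)) (hl_pos : 0 < l)
    (hL : L ∈ upperBounds (spectrum ℝ P)) {c : ℝ} (hc : 0 ≤ c) {x y : ι → ℝ}
    (hxy : x ⬝ᵥ P *ᵥ x ≤ c ^ 2 * (y ⬝ᵥ P *ᵥ y)) :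
    √(x ⬝ᵥ x) ≤ √(L / l) * c * √(y ⬝ᵥ y) := by
  have hsq : x ⬝ᵥ x ≤ L / l * c ^ 2 * (y ⬝ᵥ y) := by
    rw [div_mul_eq_mul_div, div_mul_eq_mul_div, le_div_iff₀' hl_pos]
    calc l * (x ⬝ᵥ x) ≤ x ⬝ᵥ P *ᵥ x := mul_dotProduct_self_le_dotProduct_mulVec hP hl x
      _ ≤ c ^ 2 * (y ⬝ᵥ P *ᵥ y) := hxy
      _ ≤ c ^ 2 * (L * (y ⬝ᵥ y)) := by
        gcongr
        exact dotProduct_mulVec_le_mul_dotProduct_self hP hL y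
      _ = L * c ^ 2 * (y ⬝ᵥ y) := by ring
  have hy : 0 ≤ y ⬝ᵥ y := dotProduct_self_star_nonneg y
  calc √(x ⬝ᵥ x) ≤ √(L / l * c ^ 2 * (y ⬝ᵥ y)) := Real.sqrt_le_sqrt hsq
    _ = √(L / l) * c * √(y ⬝ᵥ y) := by
      rw [Real.sqrt_mul' _ hy, Real.sqrt_mul' _ (sq_nonneg c), Real.sqrt_sq hc]

end Spectrum

section QuadraticForms

variable {ι κ ρ σ R : Type*} [Fintype ι] [Fintype κ]

theorem sub_eq_mulVec_sub_add_mulVec_sub [NonUnitalNonAssocRing R]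
    {A : Matrix ρ ι R} {B : Matrix ρ κ R} {x x' : ι → R} {y y' : κ → R} {z z' : ρ → R}
    (hz : z = A *ᵥ x + B *ᵥ y) (hz' : z' = A *ᵥ x' + B *ᵥ y') :
    z - z' = A *ᵥ (x - x') + B *ᵥ (y - y') := by
  rw [hz, hz', mulVec_sub, mulVec_sub]
  abel

theorem sumElim_dotProduct_fromBlocks_diagonal_mulVec [NonUnitalNonAssocSemiring R]
    (X : Matrix ι ι R) (Y : Matrix κ κ R) (x : ι → R) (y : κ → R) :
    Sum.elim x y ⬝ᵥ fromBlocks X 0 0 Y *ᵥ Sum.elim x y = x ⬝ᵥ X *ᵥ x + y ⬝ᵥ Y *ᵥ y := by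
  simp [fromBlocks_mulVec]

variable [Fintype ρ] [Fintype σ]

theorem dotProduct_transpose_mul_mul_mulVec [CommSemiring R] (X : Matrix ρ ι R)
    (Q : Matrix ρ σ R) (Y : Matrix σ κ R) (x : ι → R) (y : κ → R) :
    x ⬝ᵥ (Xᵀ * Q * Y) *ᵥ y = (X *ᵥ x) ⬝ᵥ Q *ᵥ (Y *ᵥ y) := by
  rw [← mulVec_mulVec, ← mulVec_mulVec, dotProduct_mulVec, vecMul_transpose]

variable [CommRing R]

/-- The matrix of the quadratic form `(x, y) ↦ V (A x + B y) - r * V x`, where `V x = xᵀ P x`: the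
amount by which one step of `x ↦ A x + B y` falls short of contracting the Lyapunov function `V`
by the factor `r`. -/
def lyapunovBlock (A : Matrix ι ι R) (B : Matrix ι κ R) (P : Matrix ι ι R) (r : R) :
    Matrix (ι ⊕ κ) (ι ⊕ κ) R :=
  fromBlocks (Aᵀ * P * A - r • P) (Aᵀ * P * B) (Bᵀ * P * A) (Bᵀ * P * B)

theorem sumElim_dotProduct_lyapunovBlock_mulVec (A : Matrix ι ι R) (B : Matrix ι κ R)
    (P : Matrix ι ι R) (r : R) (x : ι → R) (y : κ → R) :
    Sum.elim x y ⬝ᵥ lyapunovBlock A B P r *ᵥ Sum.elim x y =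
      (A *ᵥ x + B *ᵥ y) ⬝ᵥ P *ᵥ (A *ᵥ x + B *ᵥ y) - r * (x ⬝ᵥ P *ᵥ x) := by
  simp only [lyapunovBlock, fromBlocks_mulVec, Sum.elim_comp_inl, Sum.elim_comp_inr,
    sumElim_dotProduct_sumElim, sub_mulVec, smul_mulVec, dotProduct_add, dotProduct_sub,
    dotProduct_smul, dotProduct_transpose_mul_mul_mulVec, mulVec_add, add_dotProduct, smul_eq_mul]
  ring

theorem dotProduct_mulVec_le_of_lyapunovBlock_add [PartialOrder R] [IsOrderedRing R]
    {A : Matrix ι ι R} {B : Matrix ι κ R} {P : Matrix ι ι R} {r : R}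
    {G : Matrix ρ (ι ⊕ κ) R} {M : Matrix ρ ρ R} {x : ι → R} {y : κ → R}
    (hM : 0 ≤ (G *ᵥ Sum.elim x y) ⬝ᵥ M *ᵥ (G *ᵥ Sum.elim x y))
    (hLMI : Sum.elim x y ⬝ᵥ (lyapunovBlock A B P r + Gᵀ * M * G) *ᵥ Sum.elim x y ≤ 0) :
    (A *ᵥ x + B *ᵥ y) ⬝ᵥ P *ᵥ (A *ᵥ x + B *ᵥ y) ≤ r * (x ⬝ᵥ P *ᵥ x) := by
  rw [add_mulVec, dotProduct_add, sumElim_dotProduct_lyapunovBlock_mulVec,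
    dotProduct_transpose_mul_mul_mulVec] at hLMI
  exact sub_nonpos.1 ((le_add_of_nonneg_right hM).trans hLMI)

theorem dotProduct_mulVec_le_of_lyapunovBlock_add_fromBlocks [PartialOrder R] [IsOrderedRing R]
    {A : Matrix ι ι R} {B : Matrix ι κ R} {P : Matrix ι ι R} {r β1 β2 : R}
    {C1 : Matrix ρ ι R} {D1 : Matrix ρ κ R} {C2 : Matrix σ ι R} {D2 : Matrix σ κ R}
    {M1 : Matrix ρ ρ R} {M2 : Matrix σ σ R} {x : ι → R} {y : κ → R}
    (hβ1 : 0 ≤ β1) (hβ2 : 0 ≤ β2)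
    (hM1 : 0 ≤ (C1 *ᵥ x + D1 *ᵥ y) ⬝ᵥ M1 *ᵥ (C1 *ᵥ x + D1 *ᵥ y))
    (hM2 : 0 ≤ (C2 *ᵥ x + D2 *ᵥ y) ⬝ᵥ M2 *ᵥ (C2 *ᵥ x + D2 *ᵥ y))
    (hLMI : Sum.elim x y ⬝ᵥ (lyapunovBlock A B P r
      + (fromBlocks C1 D1 C2 D2)ᵀ * fromBlocks (β1 • M1) 0 0 (β2 • M2) * fromBlocks C1 D1 C2 D2)
        *ᵥ Sum.elim x y ≤ 0) :
    (A *ᵥ x + B *ᵥ y) ⬝ᵥ P *ᵥ (A *ᵥ x + B *ᵥ y) ≤ r * (x ⬝ᵥ P *ᵥ x) := by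
  refine dotProduct_mulVec_le_of_lyapunovBlock_add ?_ hLMI
  simp only [fromBlocks_mulVec C1, Sum.elim_comp_inl, Sum.elim_comp_inr,
    sumElim_dotProduct_fromBlocks_diagonal_mulVec, smul_mulVec, dotProduct_smul, smul_eq_mul]
  exact add_nonneg (mul_nonneg hβ1 hM1) (mul_nonneg hβ2 hM2)

end QuadraticForms

theorem le_pow_sq_mul_of_le_sq_mul {V τ : ℕ → ℝ} {T : ℝ} (hV : ∀ t, 0 ≤ V t)
    (hτ_nonneg : ∀ t, 0 ≤ τ t) (hτ_le : ∀ t, τ t ≤ T)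
    (hstep : ∀ t, V (t + 1) ≤ τ t ^ 2 * V t) (t : ℕ) : V t ≤ (T ^ t) ^ 2 * V 0 := by
  rw [pow_right_comm]
  refine le_geom (sq_nonneg T) t fun s _ ↦ (hstep s).trans ?_
  have hVs := hV s
  have hτs := hτ_nonneg s
  gcongr
  exact hτ_le s

theorem lyapunov_lmi_linear_convergence_general
    {ι κ ρ σ : Type*} [Fintype ι] [DecidableEq ι] [Fintype κ] [Fintype ρ] [Fintype σ]
    {h : ℕ → ι → ℝ} {u : ℕ → κ → ℝ} {w1 : ℕ → ρ → ℝ} {w2 : ℕ → σ → ℝ}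
    {A : ℕ → Matrix ι ι ℝ} {B : ℕ → Matrix ι κ ℝ}
    {C1 : ℕ → Matrix ρ ι ℝ} {D1 : ℕ → Matrix ρ κ ℝ}
    {C2 : ℕ → Matrix σ ι ℝ} {D2 : ℕ → Matrix σ κ ℝ}
    (hdyn : ∀ t, h (t + 1) = A t *ᵥ h t + B t *ᵥ u t)
    (hw1 : ∀ t, w1 t = C1 t *ᵥ h t + D1 t *ᵥ u t)
    (hw2 : ∀ t, w2 t = C2 t *ᵥ h t + D2 t *ᵥ u t)
    {hstar : ι → ℝ} {ustar : κ → ℝ} {w1star : ρ → ℝ} {w2star : σ → ℝ}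
    (hfix : ∀ t, hstar = A t *ᵥ hstar + B t *ᵥ ustar)
    (hfix1 : ∀ t, w1star = C1 t *ᵥ hstar + D1 t *ᵥ ustar)
    (hfix2 : ∀ t, w2star = C2 t *ᵥ hstar + D2 t *ᵥ ustar)
    {M1 : ℕ → Matrix ρ ρ ℝ} {M2 : ℕ → Matrix σ σ ℝ}
    (hM1 : ∀ t, 0 ≤ (w1 t - w1star) ⬝ᵥ M1 t *ᵥ (w1 t - w1star))
    (hM2 : ∀ t, 0 ≤ (w2 t - w2star) ⬝ᵥ M2 t *ᵥ (w2 t - w2star))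
    {P : Matrix ι ι ℝ} (hP : P.PosDef) {τ β1 β2 : ℕ → ℝ}
    (hτ_nonneg : ∀ t, 0 ≤ τ t) (hτ_bdd : BddAbove (Set.range τ))
    (hβ1 : ∀ t, 0 ≤ β1 t) (hβ2 : ∀ t, 0 ≤ β2 t)
    (hLMI : ∀ t (v : ι ⊕ κ → ℝ),
      v ⬝ᵥ (lyapunovBlock (A t) (B t) P (τ t ^ 2)
        + (fromBlocks (C1 t) (D1 t) (C2 t) (D2 t))ᵀ
          * fromBlocks (β1 t • M1 t) 0 0 (β2 t • M2 t)
          * fromBlocks (C1 t) (D1 t) (C2 t) (D2 t)) *ᵥ v ≤ 0) :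
    (∀ t, (h (t + 1) - hstar) ⬝ᵥ P *ᵥ (h (t + 1) - hstar)
        ≤ τ t ^ 2 * ((h t - hstar) ⬝ᵥ P *ᵥ (h t - hstar))) ∧
    ∀ lmin lmax : ℝ, IsLeast (spectrum ℝ P) lmin → IsGreatest (spectrum ℝ P) lmax →
      ∀ t, √((h t - hstar) ⬝ᵥ (h t - hstar))
          ≤ √(lmax / lmin) * (⨆ s, τ s) ^ t * √((h 0 - hstar) ⬝ᵥ (h 0 - hstar)) := by
  have contraction (t : ℕ) : (h (t + 1) - hstar) ⬝ᵥ P *ᵥ (h (t + 1) - hstar)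
      ≤ τ t ^ 2 * ((h t - hstar) ⬝ᵥ P *ᵥ (h t - hstar)) := by
    have hw1_sub := sub_eq_mulVec_sub_add_mulVec_sub (hw1 t) (hfix1 t)
    have hw2_sub := sub_eq_mulVec_sub_add_mulVec_sub (hw2 t) (hfix2 t)
    rw [sub_eq_mulVec_sub_add_mulVec_sub (hdyn t) (hfix t)]
    exact dotProduct_mulVec_le_of_lyapunovBlock_add_fromBlocks (hβ1 t) (hβ2 t)
      (hw1_sub ▸ hM1 t) (hw2_sub ▸ hM2 t) (hLMI t _)
  refine ⟨contraction, fun lmin lmax hmin hmax t ↦ ?_⟩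
  have hlmin_pos : 0 < lmin := by
    open scoped MatrixOrder in exact hP.isStrictlyPositive.spectrum_pos hmin.1
  have decay := le_pow_sq_mul_of_le_sq_mul
    (V := fun s ↦ (h s - hstar) ⬝ᵥ P *ᵥ (h s - hstar))
    (fun s ↦ hP.posSemidef.dotProduct_mulVec_nonneg (h s - hstar))
    hτ_nonneg (le_ciSup hτ_bdd) contraction t
  exact sqrt_dotProduct_self_le_of_dotProduct_mulVec_le hP.isHermitian hmin.2 hlmin_pos hmax.2
    (pow_nonneg (Real.iSup_nonneg hτ_nonneg) t) decay

/-- Time-dependent Lyapunov convergence of a linear dynamical system with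
quadratic constraints (time dependent version of Lessard–Recht–Packard Theorem 4).
If the LMI is feasible at each time step with rate `τ_t ∈ [0,1]` and multipliers
`β₁ᵗ, β₂ᵗ ≥ 0`, then the `P`-quadratic form contracts by `τ_t²` at each step, and hence
`‖hᵗ − h*‖ ≤ √(κ(P)) (τ*)ᵗ ‖h⁰ − h*‖` with `τ* = sup_t τ_t` and `κ(P) = λmax(P)/λmin(P)`. -/
theorem lyapunov_lmi_linear_convergence
    (n m p q : ℕ)
    (h : ℕ → Fin n → ℝ) (u : ℕ → Fin m → ℝ)
    (w1 : ℕ → Fin p → ℝ) (w2 : ℕ → Fin q → ℝ)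
    (A : ℕ → Matrix (Fin n) (Fin n) ℝ) (B : ℕ → Matrix (Fin n) (Fin m) ℝ)
    (C1 : ℕ → Matrix (Fin p) (Fin n) ℝ) (D1 : ℕ → Matrix (Fin p) (Fin m) ℝ)
    (C2 : ℕ → Matrix (Fin q) (Fin n) ℝ) (D2 : ℕ → Matrix (Fin q) (Fin m) ℝ)
    (hdyn : ∀ t, h (t + 1) = (A t).mulVec (h t) + (B t).mulVec (u t))
    (hw1 : ∀ t, w1 t = (C1 t).mulVec (h t) + (D1 t).mulVec (u t))
    (hw2 : ∀ t, w2 t = (C2 t).mulVec (h t) + (D2 t).mulVec (u t))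
    (hstar : Fin n → ℝ) (ustar : Fin m → ℝ) (w1star : Fin p → ℝ) (w2star : Fin q → ℝ)
    (hfix : ∀ t, hstar = (A t).mulVec hstar + (B t).mulVec ustar)
    (hfix1 : ∀ t, w1star = (C1 t).mulVec hstar + (D1 t).mulVec ustar)
    (hfix2 : ∀ t, w2star = (C2 t).mulVec hstar + (D2 t).mulVec ustar)
    (M1 : ℕ → Matrix (Fin p) (Fin p) ℝ) (M2 : ℕ → Matrix (Fin q) (Fin q) ℝ)
    (hM1symm : ∀ t, (M1 t).IsSymm) (hM2symm : ∀ t, (M2 t).IsSymm)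
    (hM1 : ∀ t, 0 ≤ (w1 t - w1star) ⬝ᵥ (M1 t).mulVec (w1 t - w1star))
    (hM2 : ∀ t, 0 ≤ (w2 t - w2star) ⬝ᵥ (M2 t).mulVec (w2 t - w2star))
    (P : Matrix (Fin n) (Fin n) ℝ) (hPsymm : P.IsSymm)
    (hPpos : ∀ v : Fin n → ℝ, v ≠ 0 → 0 < v ⬝ᵥ P.mulVec v)
    (τ β1 β2 : ℕ → ℝ)
    (hτ : ∀ t, τ t ∈ Set.Icc (0 : ℝ) 1)
    (hβ1 : ∀ t, 0 ≤ β1 t) (hβ2 : ∀ t, 0 ≤ β2 t)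
    (hLMI : ∀ t, ∀ v : Fin n ⊕ Fin m → ℝ,
      v ⬝ᵥ (Matrix.fromBlocks
          ((A t)ᵀ * P * A t - (τ t) ^ 2 • P) ((A t)ᵀ * P * B t)
          ((B t)ᵀ * P * A t) ((B t)ᵀ * P * B t)
        + (Matrix.fromBlocks (C1 t) (D1 t) (C2 t) (D2 t))ᵀ
          * Matrix.fromBlocks (β1 t • M1 t) 0 0 (β2 t • M2 t)
          * Matrix.fromBlocks (C1 t) (D1 t) (C2 t) (D2 t)).mulVec v ≤ 0) :
    (∀ t, (h (t + 1) - hstar) ⬝ᵥ P.mulVec (h (t + 1) - hstar)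
        ≤ (τ t) ^ 2 * ((h t - hstar) ⬝ᵥ P.mulVec (h t - hstar))) ∧
    ∀ lmin lmax : ℝ,
      IsLeast {μ : ℝ | ∃ v : Fin n → ℝ, v ≠ 0 ∧ P.mulVec v = μ • v} lmin →
      IsGreatest {μ : ℝ | ∃ v : Fin n → ℝ, v ≠ 0 ∧ P.mulVec v = μ • v} lmax →
      ∀ t : ℕ, Real.sqrt ((h t - hstar) ⬝ᵥ (h t - hstar))
          ≤ Real.sqrt (lmax / lmin) * (⨆ s, τ s) ^ t
            * Real.sqrt ((h 0 - hstar) ⬝ᵥ (h 0 - hstar)) := by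
  rw [← spectrum_eq_setOf_exists_mulVec_eq_smul]
  exact lyapunov_lmi_linear_convergence_general hdyn hw1 hw2 hfix hfix1 hfix2 hM1 hM2
    (.of_dotProduct_mulVec_pos (isHermitian_iff_isSymm.2 hPsymm) hPpos)
    (fun t ↦ (hτ t).1) ⟨1, Set.forall_mem_range.2 fun t ↦ (hτ t).2⟩ hβ1 hβ2 hLMI
end

section
/- Let F ∈ ℝ^{M×N}, let f : ℝ^N → ℝ and g : ℝ^M → ℝ be convex and differentiable, and let Q₁ₓ, Q₂ₓ, Q₁z, Q₂z, χₓ, χz be strictly positive reals with χₓ(Q₁ₓ + Q₂ₓ) = 1 and χz(Q₁z + Q₂z) = 1. Suppose the vectors x̂₁, x̂₂, h₁ₓ, h₂ₓ ∈ ℝ^N and ẑ₁, ẑ₂, h₁z, h₂z ∈ ℝ^M satisfy the fixed-point equations of 2-layer MLVAMP: x̂₁ = Prox_{f/Q₁ₓ}(h₁ₓ); ẑ₁ = Prox_{g/Q₁z}(h₁z); ẑ₂ = F(Q₂z FᵀF + Q₂ₓ I)⁻¹(Q₂ₓ h₂ₓ + Q₂z Fᵀ h₂z); x̂₂ = (Q₂z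 FᵀF + Q₂ₓ I)⁻¹(Q₂ₓ h₂ₓ + Q₂z Fᵀ h₂z); h₂ₓ = (x̂₁/χₓ − Q₁ₓ h₁ₓ)/Q₂ₓ; h₁z = (ẑ₂/χz − Q₂z h₂z)/Q₁z; h₂z = (ẑ₁/χz − Q₁z h₁z)/Q₂z; h₁ₓ = (x̂₂/χₓ − Q₂ₓ h₂ₓ)/Q₁ₓ. Then x̂₁ = x̂₂, ẑ₁ = ẑ₂ = F x̂₁, and x̂₁ satisfies the first-order optimality condition of the generalized linear estimation problem: ∇f(x̂₁) + Fᵀ∇g(F x̂₁) = 0; in particular x̂₁ is a minimizer of x ↦ g(Fx) + f(x) over ℝ^N. -/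
open Matrix

/-!
At a proximal point `x₁` of `f / Q₁` at `h₁`, the vector `Q₁ (h₁ - x₁)` is a subgradient of `f`. The
two message updates on each of the `x` and `z` sides both express `Q₁ h₁ + Q₂ h₂` as `Q₁ + Q₂` times
an estimate; hence the estimates agree, and the subgradient equals `-Q₂ (h₂ - x₁)`. The linear
estimation step is the normal equation `Q₂ₓ (h₂ₓ - x) + Fᵀ Q₂z (h₂z - F x) = 0`, which now says that
the subgradients `u` of `f` and `w` of `g` satisfy `u + Fᵀ w = 0`, so `0` is a subgradient of
`x ↦ g (F x) + f x`. Where `f` and `g` are differentiable, these subgradients are the gradients.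
-/

section

variable {m n : Type*} [Fintype m] [Fintype n]

section Subgradient

/-- `u` is a subgradient of `φ` at `x`: the affine function through `(x, φ x)` with slope `u` lies
below `φ`. The pairing is the dot product, so that `u` plays the role of a gradient vector. -/
def IsSubgradientAt (φ : (n → ℝ) → ℝ) (u x : n → ℝ) : Prop :=
  ∀ y, φ x + u ⬝ᵥ (y - x) ≤ φ y

variable {φ ψ : (n → ℝ) → ℝ} {u v x : n → ℝ}

namespace IsSubgradientAt

theorem le_of_zero (h : IsSubgradientAt φ 0 x) (y : n → ℝ) : φ x ≤ φ y := by
  simpa using h y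

theorem add (hφ : IsSubgradientAt φ u x) (hψ : IsSubgradientAt ψ v x) :
    IsSubgradientAt (fun y ↦ φ y + ψ y) (u + v) x := fun y ↦ by
  rw [add_dotProduct]
  linarith [hφ y, hψ y]

theorem comp_mulVec {F : Matrix m n ℝ} {g : (m → ℝ) → ℝ} {w : m → ℝ}
    (h : IsSubgradientAt g w (F *ᵥ x)) :
    IsSubgradientAt (fun y ↦ g (F *ᵥ y)) (Fᵀ *ᵥ w) x := fun y ↦ by
  rw [mulVec_transpose, ← dotProduct_mulVec, mulVec_sub]
  exact h (F *ᵥ y)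

theorem of_div {Q : ℝ} (hQ : 0 < Q) (h : IsSubgradientAt (fun y ↦ φ y / Q) u x) :
    IsSubgradientAt φ (Q • u) x := fun y ↦ by
  have hscaled := mul_le_mul_of_nonneg_left (h y) hQ.le
  rwa [mul_add, mul_div_cancel₀ _ hQ.ne', mul_div_cancel₀ _ hQ.ne', ← smul_eq_mul Q (u ⬝ᵥ _),
    ← smul_dotProduct] at hscaled

theorem eq_of_hasFDerivAt {d : n → ℝ} (h : IsSubgradientAt φ u x)
    (hd : HasFDerivAt φ (∑ i, d i • (ContinuousLinearMap.proj i : (n → ℝ) →L[ℝ] ℝ)) x) :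
    u = d := by
  classical
  let ℓ : (n → ℝ) →L[ℝ] ℝ := ∑ i, u i • ContinuousLinearMap.proj i
  have hℓ (y : n → ℝ) : ℓ y = u ⬝ᵥ y := by simp [ℓ, dotProduct]
  have hmin : IsLocalMin (φ - ⇑ℓ) x := .of_forall fun y ↦ by
    have hy := h y
    rw [dotProduct_sub] at hy
    simp only [Pi.sub_apply, hℓ]
    linarith
  have hderiv := hmin.hasFDerivAt_eq_zero (hd.sub ℓ.hasFDerivAt)
  ext i
  simpa [ℓ, sub_eq_zero, Pi.single_apply, eq_comm] using
    DFunLike.congr_fun hderiv (Pi.single i 1)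

end IsSubgradientAt

end Subgradient

section Proximal

/-- `x` is the value at `z` of the proximal operator of `φ`, encoded as a minimizer of
`y ↦ φ y + ‖y - z‖₂² / 2` because `n → ℝ` carries the supremum norm. -/
def IsProximalPoint (φ : (n → ℝ) → ℝ) (z x : n → ℝ) : Prop :=
  ∀ y, φ x + ((x - z) ⬝ᵥ (x - z)) / 2 ≤ φ y + ((y - z) ⬝ᵥ (y - z)) / 2

variable {φ : (n → ℝ) → ℝ} {x z : n → ℝ}

namespace IsProximalPoint

theorem le_add_mul_of_convexOn (hφ : ConvexOn ℝ Set.univ φ) (h : IsProximalPoint φ z x)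
    (y : n → ℝ) {t : ℝ} (ht₀ : 0 < t) (ht₁ : t ≤ 1) :
    φ x + (z - x) ⬝ᵥ (y - x) ≤ φ y + t * (((y - x) ⬝ᵥ (y - x)) / 2) := by
  have hconvex : φ (x + t • (y - x)) ≤ (1 - t) * φ x + t * φ y := by
    have hcomb : x + t • (y - x) = (1 - t) • x + t • y := by module
    rw [hcomb]
    exact hφ.2 (Set.mem_univ x) (Set.mem_univ y) (sub_nonneg.2 ht₁) ht₀.le (sub_add_cancel 1 t)
  have hquadratic : (x + t • (y - x) - z) ⬝ᵥ (x + t • (y - x) - z) =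
      (x - z) ⬝ᵥ (x - z) - 2 * t * ((z - x) ⬝ᵥ (y - x)) + t ^ 2 * ((y - x) ⬝ᵥ (y - x)) := by
    have hshift : x + t • (y - x) - z = t • (y - x) - (z - x) := by abel
    rw [hshift, ← neg_sub z x]
    simp only [sub_dotProduct (t • (y - x)), dotProduct_sub _ (t • (y - x)), smul_dotProduct,
      dotProduct_smul, neg_dotProduct_neg, smul_eq_mul, dotProduct_comm (y - x) (z - x)]
    ring
  have hmin := h (x + t • (y - x))
  rw [hquadratic] at hmin
  refine le_of_mul_le_mul_left ?_ ht₀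
  linarith

theorem isSubgradientAt (hφ : ConvexOn ℝ Set.univ φ) (h : IsProximalPoint φ z x) :
    IsSubgradientAt φ (z - x) x := fun y ↦ by
  have hlim : Filter.Tendsto (fun t : ℝ ↦ φ y + t * (((y - x) ⬝ᵥ (y - x)) / 2))
      (nhdsWithin 0 (Set.Ioi 0)) (nhds (φ y)) :=
    tendsto_nhdsWithin_of_tendsto_nhds <| Continuous.tendsto' (by fun_prop) _ _ (by simp)
  refine ge_of_tendsto hlim ?_
  filter_upwards [Ioc_mem_nhdsGT one_pos] with t ht
  exact h.le_add_mul_of_convexOn hφ y ht.1 ht.2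

theorem isSubgradientAt_of_div {Q : ℝ} (hQ : 0 < Q) (hφ : ConvexOn ℝ Set.univ φ)
    (h : IsProximalPoint (fun y ↦ φ y / Q) z x) : IsSubgradientAt φ (Q • (z - x)) x := by
  have hconvex : ConvexOn ℝ Set.univ fun y ↦ φ y / Q := by
    simpa only [div_eq_inv_mul, smul_eq_mul] using hφ.smul (inv_nonneg.2 hQ.le)
  exact (h.isSubgradientAt hconvex).of_div hQ

end IsProximalPoint

end Proximal

section MessageUpdate

variable {K E : Type*} [Field K] [AddCommGroup E] [Module K E] {Q₁ Q₂ χ : K} {h₁ h₂ x x₁ x₂ : E}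

theorem smul_add_smul_eq_of_message_update (hQ₂ : Q₂ ≠ 0) (hχ : χ * (Q₁ + Q₂) = 1)
    (h : h₂ = Q₂⁻¹ • (χ⁻¹ • x - Q₁ • h₁)) : Q₁ • h₁ + Q₂ • h₂ = (Q₁ + Q₂) • x := by
  rw [h, smul_inv_smul₀ hQ₂, inv_eq_of_mul_eq_one_right hχ, add_sub_cancel]

theorem eq_of_message_updates (hQ₁ : Q₁ ≠ 0) (hQ₂ : Q₂ ≠ 0) (hχ : χ * (Q₁ + Q₂) = 1)
    (h₂_eq : h₂ = Q₂⁻¹ • (χ⁻¹ • x₁ - Q₁ • h₁)) (h₁_eq : h₁ = Q₁⁻¹ • (χ⁻¹ • x₂ - Q₂ • h₂)) :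
    x₁ = x₂ := by
  have hx₁ := smul_add_smul_eq_of_message_update hQ₂ hχ h₂_eq
  have hx₂ := smul_add_smul_eq_of_message_update hQ₁ (add_comm Q₁ Q₂ ▸ hχ) h₁_eq
  rw [add_comm (Q₂ • h₂), hx₁, add_comm Q₂] at hx₂
  exact smul_right_injective E (right_ne_zero_of_mul_eq_one hχ) hx₂

theorem smul_sub_eq_neg_of_message_update (hQ₂ : Q₂ ≠ 0) (hχ : χ * (Q₁ + Q₂) = 1)
    (h : h₂ = Q₂⁻¹ • (χ⁻¹ • x - Q₁ • h₁)) : Q₁ • (h₁ - x) = -(Q₂ • (h₂ - x)) := by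
  linear_combination (norm := module) smul_add_smul_eq_of_message_update hQ₂ hχ h

end MessageUpdate

section LinearEstimation

variable [DecidableEq n] {a b : ℝ}

theorem isUnit_smul_transpose_mul_self_add_smul_one (F : Matrix m n ℝ) (ha : 0 ≤ a) (hb : 0 < b) :
    IsUnit (a • (Fᵀ * F) + b • (1 : Matrix n n ℝ)) := by
  have hgram : (a • (Fᵀ * F)).PosSemidef := by
    simpa only [conjTranspose_eq_transpose_of_trivial] using
      (posSemidef_conjTranspose_mul_self F).smul ha
  exact (PosDef.posSemidef_add hgram (PosDef.one.smul hb)).isUnit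

theorem ridge_normal_equation (F : Matrix m n ℝ) (ha : 0 ≤ a) (hb : 0 < b) {p x : n → ℝ}
    {q : m → ℝ} (hx : x = (a • (Fᵀ * F) + b • (1 : Matrix n n ℝ))⁻¹ *ᵥ (b • p + a • Fᵀ *ᵥ q)) :
    b • (p - x) + Fᵀ *ᵥ (a • (q - F *ᵥ x)) = 0 := by
  have hsolve : (a • (Fᵀ * F) + b • (1 : Matrix n n ℝ)) *ᵥ x = b • p + a • Fᵀ *ᵥ q := by
    rw [hx, mulVec_mulVec, mul_nonsing_inv _ ((isUnit_iff_isUnit_det _).1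
      (isUnit_smul_transpose_mul_self_add_smul_one F ha hb)), one_mulVec]
  rw [add_mulVec, smul_mulVec, smul_mulVec, one_mulVec, ← mulVec_mulVec] at hsolve
  rw [mulVec_smul, mulVec_sub]
  linear_combination (norm := module) -hsolve

end LinearEstimation

theorem mlvamp_fixed_point_is_glm_minimizer_general [DecidableEq n] (F : Matrix m n ℝ)
    {f : (n → ℝ) → ℝ} {g : (m → ℝ) → ℝ}
    (hf : ConvexOn ℝ Set.univ f) (hg : ConvexOn ℝ Set.univ g)
    {Q1x Q2x Q1z Q2z χx χz : ℝ}
    (hQ1x : 0 < Q1x) (hQ2x : 0 < Q2x) (hQ1z : 0 < Q1z) (hQ2z : 0 < Q2z)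
    (hχx : χx * (Q1x + Q2x) = 1) (hχz : χz * (Q1z + Q2z) = 1)
    {x1 x2 h1x h2x : n → ℝ} {z1 z2 h1z h2z : m → ℝ}
    (hx1 : IsProximalPoint (fun x ↦ f x / Q1x) h1x x1)
    (hz1 : IsProximalPoint (fun z ↦ g z / Q1z) h1z z1)
    (hz2 : z2 = F *ᵥ (Q2z • (Fᵀ * F) + Q2x • (1 : Matrix n n ℝ))⁻¹ *ᵥ
      (Q2x • h2x + Q2z • Fᵀ *ᵥ h2z))
    (hx2 : x2 = (Q2z • (Fᵀ * F) + Q2x • (1 : Matrix n n ℝ))⁻¹ *ᵥ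
      (Q2x • h2x + Q2z • Fᵀ *ᵥ h2z))
    (hh2x : h2x = Q2x⁻¹ • (χx⁻¹ • x1 - Q1x • h1x))
    (hh1z : h1z = Q1z⁻¹ • (χz⁻¹ • z2 - Q2z • h2z))
    (hh2z : h2z = Q2z⁻¹ • (χz⁻¹ • z1 - Q1z • h1z))
    (hh1x : h1x = Q1x⁻¹ • (χx⁻¹ • x2 - Q2x • h2x)) :
    x1 = x2 ∧ z1 = F *ᵥ x1 ∧ z2 = F *ᵥ x1 ∧
    (∃ u w, IsSubgradientAt f u x1 ∧ IsSubgradientAt g w (F *ᵥ x1) ∧ u + Fᵀ *ᵥ w = 0) ∧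
    ∀ x, g (F *ᵥ x1) + f x1 ≤ g (F *ᵥ x) + f x := by
  obtain rfl : x1 = x2 := eq_of_message_updates hQ1x.ne' hQ2x.ne' hχx hh2x hh1x
  obtain rfl : z1 = z2 := eq_of_message_updates hQ1z.ne' hQ2z.ne' hχz hh2z hh1z
  obtain rfl : z1 = F *ᵥ x1 := hz2.trans (congrArg (F *ᵥ ·) hx2.symm)
  have hu : IsSubgradientAt f (Q1x • (h1x - x1)) x1 := hx1.isSubgradientAt_of_div hQ1x hf
  have hw : IsSubgradientAt g (Q1z • (h1z - F *ᵥ x1)) (F *ᵥ x1) :=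
    hz1.isSubgradientAt_of_div hQ1z hg
  have hstationary : Q1x • (h1x - x1) + Fᵀ *ᵥ (Q1z • (h1z - F *ᵥ x1)) = 0 := by
    rw [smul_sub_eq_neg_of_message_update hQ2x.ne' hχx hh2x,
      smul_sub_eq_neg_of_message_update hQ2z.ne' hχz hh2z, mulVec_neg, ← neg_add,
      ridge_normal_equation F hQ2z.le hQ2x hx2, neg_zero]
  have hzero : IsSubgradientAt (fun x ↦ g (F *ᵥ x) + f x) 0 x1 := by
    rw [← hstationary, add_comm]
    exact hw.comp_mulVec.add hu
  exact ⟨rfl, rfl, rfl, ⟨_, _, hu, hw, hstationary⟩, hzero.le_of_zero⟩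

end

/-- At a fixed point of 2-layer MLVAMP (in the MAP setting) for the problem
`min_x g(Fx) + f(x)` with `f, g` convex and differentiable (with gradients `df`, `dg`),
one has `x̂₁ = x̂₂`, `ẑ₁ = ẑ₂ = F x̂₁`, the first-order optimality condition
`∇f(x̂₁) + Fᵀ∇g(F x̂₁) = 0` holds, and `x̂₁` minimizes `x ↦ g(Fx) + f(x)`.
The proximal steps are encoded by their minimizing property. -/
theorem mlvamp_fixed_point_is_glm_minimizer
    (M N : ℕ) (F : Matrix (Fin M) (Fin N) ℝ)
    (f : (Fin N → ℝ) → ℝ) (g : (Fin M → ℝ) → ℝ)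
    (hf : ConvexOn ℝ Set.univ f) (hg : ConvexOn ℝ Set.univ g)
    (df : (Fin N → ℝ) → Fin N → ℝ) (dg : (Fin M → ℝ) → Fin M → ℝ)
    (hdf : ∀ x : Fin N → ℝ, HasFDerivAt f
      (∑ i, df x i • (ContinuousLinearMap.proj i : (Fin N → ℝ) →L[ℝ] ℝ)) x)
    (hdg : ∀ z : Fin M → ℝ, HasFDerivAt g
      (∑ j, dg z j • (ContinuousLinearMap.proj j : (Fin M → ℝ) →L[ℝ] ℝ)) z)
    (Q1x Q2x Q1z Q2z χx χz : ℝ)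
    (hQ1x : 0 < Q1x) (hQ2x : 0 < Q2x) (hQ1z : 0 < Q1z) (hQ2z : 0 < Q2z)
    (hχx : 0 < χx) (hχz : 0 < χz)
    (hχxeq : χx * (Q1x + Q2x) = 1) (hχzeq : χz * (Q1z + Q2z) = 1)
    (x1 x2 h1x h2x : Fin N → ℝ) (z1 z2 h1z h2z : Fin M → ℝ)
    -- x̂₁ = Prox_{f/Q₁ₓ}(h₁ₓ) :
    (hx1 : ∀ x : Fin N → ℝ,
      f x1 / Q1x + ((x1 - h1x) ⬝ᵥ (x1 - h1x)) / 2
        ≤ f x / Q1x + ((x - h1x) ⬝ᵥ (x - h1x)) / 2)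
    -- ẑ₁ = Prox_{g/Q₁z}(h₁z) :
    (hz1 : ∀ z : Fin M → ℝ,
      g z1 / Q1z + ((z1 - h1z) ⬝ᵥ (z1 - h1z)) / 2
        ≤ g z / Q1z + ((z - h1z) ⬝ᵥ (z - h1z)) / 2)
    -- LMMSE steps :
    (hz2 : z2 = F.mulVec ((Q2z • (Fᵀ * F) + Q2x • (1 : Matrix (Fin N) (Fin N) ℝ))⁻¹.mulVec
      (Q2x • h2x + Q2z • Fᵀ.mulVec h2z)))
    (hx2 : x2 = (Q2z • (Fᵀ * F) + Q2x • (1 : Matrix (Fin N) (Fin N) ℝ))⁻¹.mulVec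
      (Q2x • h2x + Q2z • Fᵀ.mulVec h2z))
    -- update equations at the fixed point :
    (hh2x : h2x = Q2x⁻¹ • (χx⁻¹ • x1 - Q1x • h1x))
    (hh1z : h1z = Q1z⁻¹ • (χz⁻¹ • z2 - Q2z • h2z))
    (hh2z : h2z = Q2z⁻¹ • (χz⁻¹ • z1 - Q1z • h1z))
    (hh1x : h1x = Q1x⁻¹ • (χx⁻¹ • x2 - Q2x • h2x)) :
    x1 = x2 ∧ z1 = F.mulVec x1 ∧ z2 = F.mulVec x1 ∧
    df x1 + Fᵀ.mulVec (dg (F.mulVec x1)) = 0 ∧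
    ∀ x : Fin N → ℝ, g (F.mulVec x1) + f x1 ≤ g (F.mulVec x) + f x := by
  obtain ⟨hx, hz1F, hz2F, ⟨u, w, hu, hw, hstationary⟩, hmin⟩ :=
    mlvamp_fixed_point_is_glm_minimizer_general F hf hg hQ1x hQ2x hQ1z hQ2z hχxeq hχzeq
      hx1 hz1 hz2 hx2 hh2x hh1z hh2z hh1x
  rw [hu.eq_of_hasFDerivAt (hdf x1), hw.eq_of_hasFDerivAt (hdg _)] at hstationary
  exact ⟨hx, hz1F, hz2F, hstationary, hmin⟩
end

section
/- Let f : ℝ^n → ℝ be convex and twice continuously differentiable, and let γ > 0. Then Prox_{γf} : ℝ^n → ℝ^n is differentiable at every point x ∈ ℝ^n, the matrix I + γ·∇²f(Prox_{γf}(x)) is invertible (where ∇²f denotes the Hessian of f), and the Jacobian of Prox_{γf} at x equals (I + γ·∇²f(Prox_{γf}(x)))⁻¹. -/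
/-!
The minimality of `P z` in the definition of the proximal operator of a convex function `φ` is the
equation `P z + ∇φ (P z) = z`, so `P` is a right inverse of `id + ∇φ`. Convexity makes `∇φ`
monotone, which has two consequences: `P` is nonexpansive, hence continuous, and `⟪∇²φ v, v⟫ ≥ 0`,
so that `id + ∇²φ` is coercive and therefore invertible. A continuous right inverse of a map with
invertible derivative is differentiable, with the inverse derivative. The theorem is the case
`φ = γ f`.
-/

open scoped RealInnerProductSpace

theorem apply_add_fderiv_sub_le_of_convexOn {V : Type*} [NormedAddCommGroup V] [NormedSpace ℝ V]
    {s : Set V} {f : V → ℝ} (hf : ConvexOn ℝ s f) {f' : V →L[ℝ] ℝ} {x y : V}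
    (hx : x ∈ s) (hy : y ∈ s) (hf' : HasFDerivAt f f' x) : f x + f' (y - x) ≤ f y := by
  let line : ℝ →ᵃ[ℝ] V := AffineMap.lineMap x y
  have line_zero : line 0 = x := AffineMap.lineMap_apply_zero x y
  have line_one : line 1 = y := AffineMap.lineMap_apply_one x y
  have hderiv : HasDerivAt (f ∘ line) (f' (y - x)) 0 :=
    HasFDerivAt.comp_hasDerivAt 0 (line_zero ▸ hf') AffineMap.hasDerivAt_lineMap
  have hslope : f' (y - x) ≤ slope (f ∘ line) 0 1 :=
    (hf.comp_affineMap line).le_slope_of_hasDerivAt (by simpa [line_zero] using hx)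
      (by simpa [line_one] using hy) one_pos hderiv
  simp only [slope_def_field, Function.comp_apply, line_zero, line_one, sub_zero, div_one]
    at hslope
  linarith

section MonotoneOperator

/-- `P` is a resolvent `(id + G)⁻¹` of the operator `G`, encoded as a right inverse of `id + G`;
a step size `γ` is absorbed into `G`. -/
def IsResolvent {E : Type*} [Add E] (G P : E → E) : Prop :=
  ∀ z, P z + G (P z) = z

variable {E : Type*} [NormedAddCommGroup E] [InnerProductSpace ℝ E]

/-- Monotone operators in the sense of Minty and Browder; on `ℝ` these are the monotone
functions. Only single-valued, everywhere defined operators are considered. -/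
def IsMonotoneOperator (G : E → E) : Prop :=
  ∀ x y, 0 ≤ ⟪G x - G y, x - y⟫

namespace IsMonotoneOperator

variable {G P : E → E}

theorem monotone_inner_line (hG : IsMonotoneOperator G) (x v : E) :
    Monotone fun t : ℝ ↦ ⟪G (x + t • v), v⟫ := by
  intro s t hst
  rcases hst.eq_or_lt with rfl | hlt
  · rfl
  have hmul : 0 ≤ (t - s) * ⟪G (x + t • v) - G (x + s • v), v⟫ := by
    simpa [← sub_smul, real_inner_smul_right] using hG (x + t • v) (x + s • v)
  have hinner := nonneg_of_mul_nonneg_right hmul (sub_pos.mpr hlt)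
  rwa [inner_sub_left, sub_nonneg] at hinner

theorem inner_fderiv_self_nonneg (hG : IsMonotoneOperator G) {G' : E →L[ℝ] E} {x : E}
    (hG' : HasFDerivAt G G' x) (v : E) : 0 ≤ ⟪G' v, v⟫ := by
  have hline : HasDerivAt (fun t : ℝ ↦ G (x + t • v)) (G' v) 0 :=
    hG'.hasLineDerivAt v
  have hinner : HasDerivAt (fun t : ℝ ↦ ⟪G (x + t • v), v⟫) ⟪G' v, v⟫ 0 := by
    simpa using hline.inner ℝ (hasDerivAt_const 0 v)
  exact hinner.nonneg_of_monotone (hG.monotone_inner_line x v)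

theorem norm_sq_resolvent_sub_le_inner (hG : IsMonotoneOperator G) (hP : IsResolvent G P)
    (x y : E) : ‖P x - P y‖ ^ 2 ≤ ⟪x - y, P x - P y⟫ := by
  have hsub : x - y = (P x - P y) + (G (P x) - G (P y)) := by
    rw [← add_sub_add_comm, hP x, hP y]
  rw [hsub, inner_add_left, real_inner_self_eq_norm_sq]
  exact le_add_of_nonneg_right (hG (P x) (P y))

theorem lipschitzWith_one_resolvent (hG : IsMonotoneOperator G) (hP : IsResolvent G P) :
    LipschitzWith 1 P := by
  refine LipschitzWith.mk_one fun x y ↦ ?_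
  rw [dist_eq_norm, dist_eq_norm]
  have hsq : ‖P x - P y‖ * ‖P x - P y‖ ≤ ‖x - y‖ * ‖P x - P y‖ := by
    rw [← sq]
    exact (hG.norm_sq_resolvent_sub_le_inner hP x y).trans (real_inner_le_norm _ _)
  rcases (norm_nonneg (P x - P y)).eq_or_lt with hzero | hpos
  · exact hzero ▸ norm_nonneg _
  · exact le_of_mul_le_mul_right hsq hpos

end IsMonotoneOperator

theorem isUnit_id_add_of_inner_self_nonneg [CompleteSpace E] {T : E →L[ℝ] E}
    (hT : ∀ v, 0 ≤ ⟪T v, v⟫) : IsUnit (ContinuousLinearMap.id ℝ E + T) := by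
  refine ContinuousLinearMap.isUnit_of_forall_le_norm_inner_map _ one_pos fun v ↦ ?_
  calc ‖v‖ ^ 2 * ((1 : NNReal) : ℝ) ≤ ‖v‖ ^ 2 + ⟪T v, v⟫ := by simpa using hT v
    _ = ⟪(ContinuousLinearMap.id ℝ E + T) v, v⟫ := by simp [inner_add_left]
    _ ≤ ‖⟪(ContinuousLinearMap.id ℝ E + T) v, v⟫‖ := Real.le_norm_self _

theorem IsMonotoneOperator.exists_hasFDerivAt_resolvent [CompleteSpace E] {G P : E → E}
    (hG : IsMonotoneOperator G) (hP : IsResolvent G P) {G' : E →L[ℝ] E} {x : E}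
    (hG' : HasFDerivAt G G' (P x)) :
    ∃ J : E →L[ℝ] E, HasFDerivAt P J x ∧
      (ContinuousLinearMap.id ℝ E + G').comp J = ContinuousLinearMap.id ℝ E ∧
      J.comp (ContinuousLinearMap.id ℝ E + G') = ContinuousLinearMap.id ℝ E := by
  obtain ⟨J, hright, hleft⟩ := isUnit_iff_exists.mp <|
    isUnit_id_add_of_inner_self_nonneg (hG.inner_fderiv_self_nonneg hG')
  have hP_cont : ContinuousAt P x := (hG.lipschitzWith_one_resolvent hP).continuous.continuousAt
  refine ⟨J, ?_, hright, hleft⟩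
  exact ((hasFDerivAt_id (P x)).add hG').of_comp_of_leftInverse hP_cont (hasFDerivAt_id x)
    (.of_forall hP) (DFunLike.congr_fun hleft)

end MonotoneOperator

section Prox

/-- `P` is a proximal operator of `φ`, given by the minimizing property of its values. The
operator `Prox_{γf}` is the case `φ = γ f`. -/
def IsProximalOperator {E : Type*} [NormedAddCommGroup E] (φ : E → ℝ) (P : E → E) : Prop :=
  ∀ z x, φ (P z) + ‖P z - z‖ ^ 2 / 2 ≤ φ x + ‖x - z‖ ^ 2 / 2

variable {E : Type*} [NormedAddCommGroup E] [InnerProductSpace ℝ E] [CompleteSpace E]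

theorem isMonotoneOperator_gradient_of_convexOn {φ : E → ℝ} (hφ : ConvexOn ℝ Set.univ φ)
    {G : E → E} (hG : ∀ x, HasGradientAt φ (G x) x) : IsMonotoneOperator G := by
  have htangent (x y : E) : φ x + ⟪G x, y - x⟫ ≤ φ y :=
    apply_add_fderiv_sub_le_of_convexOn hφ trivial trivial (hG x).hasFDerivAt
  intro x y
  have hxy : φ x - ⟪G x, x - y⟫ ≤ φ y := by
    simpa only [← neg_sub x y, inner_neg_right, ← sub_eq_add_neg] using htangent x y
  have hyx : φ y + ⟪G y, x - y⟫ ≤ φ x := htangent y x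
  rw [inner_sub_left]
  linarith

theorem hasGradientAt_const_mul {f : E → ℝ} {g x : E} (hf : HasGradientAt f g x) (c : ℝ) :
    HasGradientAt (fun y ↦ c * f y) (c • g) x := by
  simpa [hasGradientAt_iff_hasFDerivAt] using hf.hasFDerivAt.const_mul c

theorem hasGradientAt_half_norm_sub_sq (x z : E) :
    HasGradientAt (fun y ↦ ‖y - z‖ ^ 2 / 2) (x - z) x := by
  have hsq : HasFDerivAt (fun y ↦ ‖y - z‖ ^ 2) _ x := ((hasFDerivAt_id x).sub_const z).norm_sq
  rw [hasGradientAt_iff_hasFDerivAt]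
  simp only [div_eq_inv_mul]
  refine (hsq.const_mul (2⁻¹ : ℝ)).congr_fderiv ?_
  ext v
  simp

theorem IsProximalOperator.isResolvent {φ : E → ℝ} {P G : E → E} (hP : IsProximalOperator φ P)
    (hG : ∀ z, HasGradientAt φ (G (P z)) (P z)) : IsResolvent G P := by
  intro z
  have hmin : IsLocalMin (fun x ↦ φ x + ‖x - z‖ ^ 2 / 2) (P z) := .of_forall (hP z)
  have hgrad : G (P z) + (P z - z) = 0 := by
    have hzero := hmin.hasFDerivAt_eq_zero <|
      (hG z).hasFDerivAt.add (hasGradientAt_half_norm_sub_sq (P z) z).hasFDerivAt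
    rwa [← map_add, map_eq_zero_iff _ (InnerProductSpace.toDual ℝ E).injective] at hzero
  rw [← sub_eq_zero, ← hgrad]
  abel

theorem jacobian_of_prox_general {f : E → ℝ} (hf : ConvexOn ℝ Set.univ f) {grad : E → E}
    (hgrad : ∀ x, HasGradientAt f (grad x) x) {γ : ℝ} (hγ : 0 ≤ γ) {P : E → E}
    (hP : IsProximalOperator (fun x ↦ γ * f x) P) {H : E →L[ℝ] E} {x : E}
    (hH : HasFDerivAt grad H (P x)) :
    ∃ J : E →L[ℝ] E, HasFDerivAt P J x ∧
      (ContinuousLinearMap.id ℝ E + γ • H).comp J = ContinuousLinearMap.id ℝ E ∧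
      J.comp (ContinuousLinearMap.id ℝ E + γ • H) = ContinuousLinearMap.id ℝ E := by
  have hγgrad (y : E) : HasGradientAt (fun x ↦ γ * f x) (γ • grad y) y :=
    hasGradientAt_const_mul (hgrad y) γ
  have hmono : IsMonotoneOperator fun y ↦ γ • grad y :=
    isMonotoneOperator_gradient_of_convexOn (hf.smul hγ) hγgrad
  have hres : IsResolvent (fun y ↦ γ • grad y) P := hP.isResolvent fun z ↦ hγgrad (P z)
  exact hmono.exists_hasFDerivAt_resolvent hres (hH.const_smul γ)

end Prox

/-- For convex, twice continuously differentiable `f : ℝⁿ → ℝ` (with gradient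
`grad` and Hessian `hess`) and `γ > 0`, the proximal operator `P = Prox_{γf}` (hypothesized
via its minimizing property) is differentiable everywhere, `I + γ·∇²f(P x)` is invertible,
and the Jacobian of `P` at `x` is `(I + γ·∇²f(P x))⁻¹`. -/
theorem jacobian_of_prox
    (n : ℕ) (f : EuclideanSpace ℝ (Fin n) → ℝ)
    (hconv : ConvexOn ℝ Set.univ f) (hf : ContDiff ℝ 2 f)
    (grad : EuclideanSpace ℝ (Fin n) → EuclideanSpace ℝ (Fin n))
    (hgrad : ∀ x, HasGradientAt f (grad x) x)
    (hess : EuclideanSpace ℝ (Fin n) →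
      EuclideanSpace ℝ (Fin n) →L[ℝ] EuclideanSpace ℝ (Fin n))
    (hhess : ∀ x, HasFDerivAt grad (hess x) x)
    (hhesscont : Continuous hess)
    (γ : ℝ) (hγ : 0 < γ)
    (P : EuclideanSpace ℝ (Fin n) → EuclideanSpace ℝ (Fin n))
    (hP : ∀ z x : EuclideanSpace ℝ (Fin n),
      γ * f (P z) + ‖P z - z‖ ^ 2 / 2 ≤ γ * f x + ‖x - z‖ ^ 2 / 2) :
    ∀ x : EuclideanSpace ℝ (Fin n),
      ∃ J : EuclideanSpace ℝ (Fin n) →L[ℝ] EuclideanSpace ℝ (Fin n),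
        HasFDerivAt P J x ∧
        (ContinuousLinearMap.id ℝ (EuclideanSpace ℝ (Fin n)) + γ • hess (P x)).comp J
          = ContinuousLinearMap.id ℝ (EuclideanSpace ℝ (Fin n)) ∧
        J.comp (ContinuousLinearMap.id ℝ (EuclideanSpace ℝ (Fin n)) + γ • hess (P x))
          = ContinuousLinearMap.id ℝ (EuclideanSpace ℝ (Fin n)) :=
  fun x ↦ jacobian_of_prox_general hconv hgrad hγ.le hP (hhess (P x))
end

section
/- Let σ ≥ 0 and let f : ℝ^n → ℝ be convex, continuous, and σ-strongly convex (i.e. f − (σ/2)‖·‖₂² is convex). Let γ > 0 and a ≥ 0. Then the operator x ↦ a·Prox_{γf}(x) − x is Lipschitz with constant max(1, a/(1 + γσ) − 1): for all x, y ∈ ℝ^n, ‖(a·Prox_{γf}(x) − x) − (a·Prox_{γf}(y) − y)‖₂ ≤ max(1, a/(1 + γσ) − 1)·‖x − y‖₂. -/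
/-!
Adding `‖x - z‖² / 2` to an `m`-strongly convex function makes it `(1 + m)`-strongly convex, so it
grows at least quadratically away from its minimiser. Comparing the growth at two proximal points
`p`, `q` of `x`, `y` shows, for `c = 1 + m`, that `c * ‖p - q‖² ≤ ⟪p - q, x - y⟫`. With `u = p - q`
and `d = x - y` this says exactly that the reflection `2c u - d` is no longer than `d`, and
`a u - d = t (2c u - d) + (t - 1) d` for `t = a / (2c)` gives the constant
`t + |t - 1| = max 1 (a / c - 1)`.
-/

open Filter Set Topology
open scoped RealInnerProductSpace

section UniformConvexity

variable {E : Type*} [NormedAddCommGroup E] [NormedSpace ℝ E] {s : Set E} {f : E → ℝ}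

theorem uniformConvexOn_modulus_le_sub_of_isMinOn {φ : ℝ → ℝ} {p w : E}
    (hf : UniformConvexOn s φ f) (hp : p ∈ s) (hmin : IsMinOn f s p) (hw : w ∈ s) :
    φ ‖w - p‖ ≤ f w - f p := by
  have growth_on_segment : ∀ t ∈ Ioo (0 : ℝ) 1, (1 - t) * φ ‖w - p‖ ≤ f w - f p := by
    rintro t ⟨ht0, ht1⟩
    have ht1' : 0 ≤ 1 - t := sub_nonneg.2 ht1.le
    have hle := (hmin (hf.1 hw hp ht0.le ht1' (by ring))).trans
      (hf.2 hw hp ht0.le ht1' (by ring))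
    simp only [smul_eq_mul] at hle
    refine le_of_mul_le_mul_left ?_ ht0
    linear_combination hle
  have hlim : Tendsto (fun t : ℝ ↦ (1 - t) * φ ‖w - p‖) (𝓝[>] 0) (𝓝 (φ ‖w - p‖)) := by
    refine tendsto_nhdsWithin_of_tendsto_nhds (Continuous.tendsto' ?_ _ _ (by simp))
    fun_prop
  exact le_of_tendsto hlim
    (eventually_of_mem (Ioo_mem_nhdsGT one_pos) growth_on_segment)

theorem strongConvexOn_const_mul {m γ : ℝ} (hf : StrongConvexOn s m f) (hγ : 0 ≤ γ) :
    StrongConvexOn s (γ * m) (fun x ↦ γ * f x) := by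
  refine ⟨hf.1, fun x hx y hy a b ha hb hab ↦ ?_⟩
  have hle := mul_le_mul_of_nonneg_left (hf.2 hx hy ha hb hab) hγ
  simp only [smul_eq_mul] at hle ⊢
  linear_combination hle

end UniformConvexity

section Prox

variable {E : Type*} [NormedAddCommGroup E] [InnerProductSpace ℝ E] {s : Set E} {f : E → ℝ}
  {m : ℝ}

theorem strongConvexOn_half_norm_sub_sq (hs : Convex ℝ s) (z : E) :
    StrongConvexOn s 1 (fun x ↦ ‖x - z‖ ^ 2 / 2) := by
  have haffine : (fun x ↦ ‖x - z‖ ^ 2 / 2 - 1 / 2 * ‖x‖ ^ 2) =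
      fun x ↦ (-innerₗ E z) x + ‖z‖ ^ 2 / 2 := by
    funext x
    rw [norm_sub_sq_real, LinearMap.neg_apply, innerₗ_apply_apply, real_inner_comm]
    ring
  rw [strongConvexOn_iff_convex, haffine]
  exact ((-innerₗ E z).convexOn hs).add_const _

theorem strongConvexOn_add_half_norm_sub_sq (hf : StrongConvexOn s m f) (z : E) :
    StrongConvexOn s (1 + m) (fun x ↦ f x + ‖x - z‖ ^ 2 / 2) := by
  have hadd := hf.add (strongConvexOn_half_norm_sub_sq hf.1 z)
  have hmodulus : (fun r : ℝ ↦ m / 2 * r ^ 2) + (fun r : ℝ ↦ 1 / 2 * r ^ 2) =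
      fun r ↦ (1 + m) / 2 * r ^ 2 := by
    funext r
    simp only [Pi.add_apply]
    ring
  rwa [hmodulus] at hadd

/-- `p` is a proximal point of `z` for `f` constrained to `s`: a minimiser over `s` of
`x ↦ f x + ‖x - z‖² / 2`. The set `s` plays the role of the domain of an extended-valued function,
and `IsProxOn univ f z p` is the paper's `p = Prox_f(z)`. -/
def IsProxOn (s : Set E) (f : E → ℝ) (z p : E) : Prop :=
  p ∈ s ∧ IsMinOn (fun x ↦ f x + ‖x - z‖ ^ 2 / 2) s p

variable {x y p q : E}

theorem IsProxOn.half_mul_norm_sub_sq_le (hf : StrongConvexOn s m f) (hp : IsProxOn s f x p)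
    (hq : q ∈ s) :
    (1 + m) / 2 * ‖q - p‖ ^ 2 ≤ f q + ‖q - x‖ ^ 2 / 2 - (f p + ‖p - x‖ ^ 2 / 2) :=
  uniformConvexOn_modulus_le_sub_of_isMinOn (strongConvexOn_add_half_norm_sub_sq hf x) hp.1 hp.2 hq

theorem half_norm_sub_sq_exchange (p q x y : E) :
    ‖q - x‖ ^ 2 / 2 - ‖p - x‖ ^ 2 / 2 + (‖p - y‖ ^ 2 / 2 - ‖q - y‖ ^ 2 / 2) =
      ⟪p - q, x - y⟫ := by
  simp only [norm_sub_sq_real, inner_sub_left, inner_sub_right]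
  ring

theorem IsProxOn.mul_norm_sub_sq_le_inner (hf : StrongConvexOn s m f) (hp : IsProxOn s f x p)
    (hq : IsProxOn s f y q) : (1 + m) * ‖p - q‖ ^ 2 ≤ ⟪p - q, x - y⟫ := by
  have growth_at_p := hp.half_mul_norm_sub_sq_le hf hq.1
  have growth_at_q := hq.half_mul_norm_sub_sq_le hf hp.1
  rw [norm_sub_rev] at growth_at_p
  linear_combination growth_at_p + growth_at_q + half_norm_sub_sq_exchange p q x y

theorem norm_two_mul_smul_sub_le_iff {c : ℝ} (hc : 0 < c) (u d : E) :
    ‖(2 * c) • u - d‖ ≤ ‖d‖ ↔ c * ‖u‖ ^ 2 ≤ ⟪u, d⟫ := by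
  have hexpand : ‖d‖ ^ 2 - ‖(2 * c) • u - d‖ ^ 2 = 4 * c * (⟪u, d⟫ - c * ‖u‖ ^ 2) := by
    rw [norm_sub_sq_real, norm_smul, real_inner_smul_left, mul_pow, Real.norm_eq_abs, sq_abs]
    ring
  rw [← sq_le_sq₀ (norm_nonneg _) (norm_nonneg _), ← sub_nonneg, hexpand,
    mul_nonneg_iff_of_pos_left (by positivity), sub_nonneg]

theorem norm_smul_sub_le_max_mul_norm {a c : ℝ} (ha : 0 ≤ a) (hc : 0 < c) {u d : E}
    (hud : c * ‖u‖ ^ 2 ≤ ⟪u, d⟫) : ‖a • u - d‖ ≤ max 1 (a / c - 1) * ‖d‖ := by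
  obtain ⟨t, rfl⟩ : ∃ t, a = t * (2 * c) := ⟨a / (2 * c), by field_simp⟩
  have ht : 0 ≤ t := nonneg_of_mul_nonneg_left ha (by positivity)
  have hconst : t + |t - 1| = max 1 (t * (2 * c) / c - 1) := by
    rw [abs_eq_max_neg, ← max_add_add_left, max_comm]
    congr 1
    · ring
    · field_simp
      ring
  calc ‖(t * (2 * c)) • u - d‖ = ‖t • ((2 * c) • u - d) + (t - 1) • d‖ := by
        congr 1
        module
    _ ≤ t * ‖(2 * c) • u - d‖ + |t - 1| * ‖d‖ := by
        refine (norm_add_le _ _).trans_eq ?_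
        rw [norm_smul, norm_smul, Real.norm_of_nonneg ht, Real.norm_eq_abs]
    _ ≤ t * ‖d‖ + |t - 1| * ‖d‖ := by
        gcongr
        exact (norm_two_mul_smul_sub_le_iff hc u d).2 hud
    _ = max 1 (t * (2 * c) / c - 1) * ‖d‖ := by rw [← add_mul, hconst]

theorem prox_scaled_sub_id_lipschitz_strongly_convex_general {σ γ a : ℝ}
    (hf : StrongConvexOn s σ f) (hγ : 0 ≤ γ) (hγσ : 0 < 1 + γ * σ) (ha : 0 ≤ a) {P : E → E}
    (hP : ∀ z, IsProxOn s (fun x ↦ γ * f x) z (P z)) (x y : E) :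
    ‖(a • P x - x) - (a • P y - y)‖ ≤ max 1 (a / (1 + γ * σ) - 1) * ‖x - y‖ := by
  have hcocoercive : (1 + γ * σ) * ‖P x - P y‖ ^ 2 ≤ ⟪P x - P y, x - y⟫ :=
    (hP x).mul_norm_sub_sq_le_inner (strongConvexOn_const_mul hf hγ) (hP y)
  rw [sub_sub_sub_comm, ← smul_sub]
  exact norm_smul_sub_le_max_mul_norm ha hγσ hcocoercive

end Prox

/-- For `σ ≥ 0`, a convex continuous `σ`-strongly convex `f : ℝⁿ → ℝ`,
`γ > 0` and `a ≥ 0`, the operator `x ↦ a·Prox_{γf}(x) − x` is Lipschitz with constant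
`max(1, a/(1 + γσ) − 1)`. Here `P` is hypothesized to be the proximal operator of `γf`,
i.e. `P z` minimizes `x ↦ γ f x + ‖x − z‖²/2`. -/
theorem prox_scaled_sub_id_lipschitz_strongly_convex
    (n : ℕ) (σ : ℝ) (hσ : 0 ≤ σ)
    (f : EuclideanSpace ℝ (Fin n) → ℝ)
    (hconv : ConvexOn ℝ Set.univ f) (hcont : Continuous f)
    (hstrong : ConvexOn ℝ Set.univ (fun x => f x - σ / 2 * ‖x‖ ^ 2))
    (γ a : ℝ) (hγ : 0 < γ) (ha : 0 ≤ a)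
    (P : EuclideanSpace ℝ (Fin n) → EuclideanSpace ℝ (Fin n))
    (hP : ∀ z x : EuclideanSpace ℝ (Fin n),
      γ * f (P z) + ‖P z - z‖ ^ 2 / 2 ≤ γ * f x + ‖x - z‖ ^ 2 / 2) :
    ∀ x y : EuclideanSpace ℝ (Fin n),
      ‖(a • P x - x) - (a • P y - y)‖ ≤ max 1 (a / (1 + γ * σ) - 1) * ‖x - y‖ := by
  exact prox_scaled_sub_id_lipschitz_strongly_convex_general (strongConvexOn_iff_convex.2 hstrong)
    hγ.le (by positivity) ha fun z ↦ ⟨mem_univ _, fun w _ ↦ hP z w⟩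
end

section
/- Let F ∈ ℝ^{M×N}, and let f : ℝ^N → ℝ and g : ℝ^M → ℝ be convex and real analytic. Then there is a unique function x̂ : (0, ∞) → ℝ^N such that for every λ₂ > 0, Fᵀ∇g(F·x̂(λ₂)) + ∇f(x̂(λ₂)) + λ₂·x̂(λ₂) = 0; for each λ₂ > 0, x̂(λ₂) is the unique minimizer of x ↦ g(Fx) + f(x) + (λ₂/2)‖x‖₂² over ℝ^N; and x̂ is real analytic on (0, ∞), i.e. each coordinate map λ₂ ↦ x̂(λ₂)ᵢ is a real analytic function on (0, ∞). -/
open Matrix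

/-!
Let `ψ` be analytic and `m`-strongly convex on a Banach space, such as `x ⬝ᵥ x / 2`, and let `φ` be
convex and analytic. For `l > 0` the objective `J = φ + l ψ` is `l m`-strongly convex, so its
minimizing sequences are Cauchy; hence it has a minimizer, which is also its only critical point.
The Hessian `H` of `J` satisfies `l m ‖v‖² ≤ H v v`. A symmetric form `H` with such a bound is an
isomorphism onto the dual space, because `H v = η` says that `v` is a critical point of the strongly
convex function `v ↦ H v v / 2 - η v`. The implicit function theorem therefore solves
`dφ x + l dψ x = 0` for `x` analytically in `l`, and uniqueness of the critical point identifies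
this solution with the path of minimizers.
-/

open Filter Set
open scoped Topology ContDiff

section StrongConvexity

variable {E : Type*} [NormedAddCommGroup E] [NormedSpace ℝ E]
  {s : Set E} {J φ ψ : E → ℝ} {J' : E →L[ℝ] ℝ} {m l : ℝ} {x y : E}

lemma strongConvexOn_add_mul (hφ : ConvexOn ℝ s φ) (hψ : StrongConvexOn s m ψ) (hl : 0 ≤ l) :
    StrongConvexOn s (l * m) fun x => φ x + l * ψ x := by
  refine ⟨hφ.1, fun x hx y hy a b ha hb hab => ?_⟩
  have hφxy := hφ.2 hx hy ha hb hab
  have hψxy := mul_le_mul_of_nonneg_left (hψ.2 hx hy ha hb hab) hl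
  simp only [smul_eq_mul] at hφxy hψxy ⊢
  linarith

lemma strongConvexOn_bilin_self_div_two {A : E →L[ℝ] E →L[ℝ] ℝ}
    (hA : ∀ v, m * ‖v‖ ^ 2 ≤ A v v) : StrongConvexOn univ m fun v => A v v / 2 := by
  refine ⟨convex_univ, fun x _ y _ a b ha hb hab => ?_⟩
  have hsplit : A (a • x + b • y) (a • x + b • y) =
      a * A x x + b * A y y - a * b * A (x - y) (x - y) := by
    obtain rfl : b = 1 - a := by linarith
    simp only [map_add, map_sub, map_smul, _root_.add_apply, _root_.sub_apply,
      _root_.smul_apply, smul_eq_mul]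
    ring
  have hxy := mul_le_mul_of_nonneg_left (hA (x - y)) (mul_nonneg ha hb)
  simp only [hsplit, smul_eq_mul]
  linarith

lemma strongConvexOn_add_fderiv_add_le (hJ : StrongConvexOn s m J) (hx : x ∈ s) (hy : y ∈ s)
    (hJ' : HasFDerivAt J J' x) : J x + J' (y - x) + m / 2 * ‖y - x‖ ^ 2 ≤ J y := by
  have hslope : Tendsto (fun t : ℝ => t⁻¹ • (J (x + t • (y - x)) - J x)) (𝓝[>] 0)
      (𝓝 (J' (y - x))) :=
    (hJ'.hasLineDerivAt (y - x)).tendsto_slope_zero_right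
  have hbound : Tendsto (fun t : ℝ => J y - J x - (1 - t) * (m / 2 * ‖y - x‖ ^ 2)) (𝓝[>] 0)
      (𝓝 (J y - J x - (1 - 0) * (m / 2 * ‖y - x‖ ^ 2))) :=
    (Continuous.tendsto (by fun_prop) 0).mono_left nhdsWithin_le_nhds
  have hle : ∀ᶠ t : ℝ in 𝓝[>] 0, t⁻¹ • (J (x + t • (y - x)) - J x) ≤
      J y - J x - (1 - t) * (m / 2 * ‖y - x‖ ^ 2) := by
    filter_upwards [Ioo_mem_nhdsGT (zero_lt_one' ℝ)] with t ⟨ht0, ht1⟩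
    have hconv := hJ.2 hx hy (sub_nonneg.2 ht1.le) ht0.le (sub_add_cancel 1 t)
    rw [show (1 - t) • x + t • y = x + t • (y - x) by module, norm_sub_rev x y] at hconv
    simp only [smul_eq_mul] at hconv ⊢
    rw [inv_mul_le_iff₀ ht0]
    linarith
  linarith [le_of_tendsto_of_tendsto hslope hbound hle]

lemma strongConvexOn_add_le_of_hasFDerivAt_zero (hJ : StrongConvexOn univ m J)
    (hx : HasFDerivAt J (0 : E →L[ℝ] ℝ) x) (y : E) : J x + m / 2 * ‖y - x‖ ^ 2 ≤ J y := by
  simpa using strongConvexOn_add_fderiv_add_le hJ (mem_univ x) (mem_univ y) hx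

lemma strongConvexOn_le_of_hasFDerivAt_zero (hJ : StrongConvexOn univ m J) (hm : 0 ≤ m)
    (hx : HasFDerivAt J (0 : E →L[ℝ] ℝ) x) (y : E) : J x ≤ J y :=
  (le_add_of_nonneg_right (by positivity)).trans (strongConvexOn_add_le_of_hasFDerivAt_zero hJ hx y)

lemma strongConvexOn_eq_of_hasFDerivAt_zero_of_le (hJ : StrongConvexOn univ m J) (hm : 0 < m)
    (hx : HasFDerivAt J (0 : E →L[ℝ] ℝ) x) (hyx : J y ≤ J x) : y = x := by
  have hgrowth := strongConvexOn_add_le_of_hasFDerivAt_zero hJ hx y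
  have hsq : ‖y - x‖ ^ 2 ≤ 0 := nonpos_of_mul_nonpos_right (by linarith) (half_pos hm)
  simpa [sub_eq_zero] using hsq

lemma strongConvexOn_bddBelow_range (hJ : StrongConvexOn univ m J) (hm : 0 < m)
    (hJ' : HasFDerivAt J J' x) : BddBelow (range J) := by
  refine ⟨J x - ‖J'‖ ^ 2 / (2 * m), forall_mem_range.2 fun y => ?_⟩
  have htangent := strongConvexOn_add_fderiv_add_le hJ (mem_univ x) (mem_univ y) hJ'
  have hlinear : -(‖J'‖ * ‖y - x‖) ≤ J' (y - x) := neg_le_of_abs_le (J'.le_opNorm (y - x))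
  have hsquare : m / 2 * ‖y - x‖ ^ 2 - ‖J'‖ * ‖y - x‖ + ‖J'‖ ^ 2 / (2 * m) =
      (m * ‖y - x‖ - ‖J'‖) ^ 2 / (2 * m) := by
    field_simp
    ring
  have hnonneg : 0 ≤ (m * ‖y - x‖ - ‖J'‖) ^ 2 / (2 * m) := by positivity
  linarith

lemma strongConvexOn_sq_dist_le (hJ : StrongConvexOn univ m J) (hm : 0 < m) {c : ℝ}
    (hc : ∀ z, c ≤ J z) (x y : E) : dist x y ^ 2 ≤ 4 / m * (J x + J y - 2 * c) := by
  have hmid := hJ.2 (mem_univ x) (mem_univ y) one_half_pos.le one_half_pos.le (add_halves (1 : ℝ))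
  have hcmid := hc ((1 / 2 : ℝ) • x + (1 / 2 : ℝ) • y)
  simp only [smul_eq_mul] at hmid
  rw [dist_eq_norm, div_mul_eq_mul_div, le_div_iff₀ hm]
  linarith

lemma strongConvexOn_cauchySeq_of_tendsto (hJ : StrongConvexOn univ m J) (hm : 0 < m) {c : ℝ}
    (hc : ∀ z, c ≤ J z) {u : ℕ → E} (hu : Tendsto (J ∘ u) atTop (𝓝 c)) : CauchySeq u := by
  rw [cauchySeq_iff_tendsto_dist_atTop_0]
  have hgap : Tendsto (fun p : ℕ × ℕ => √(4 / m * (J (u p.1) + J (u p.2) - 2 * c)))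
      (atTop ×ˢ atTop) (𝓝 0) := by
    have hsum := (hu.comp tendsto_fst).add (hu.comp (tendsto_snd (f := atTop)))
    simpa [← two_mul] using ((hsum.sub_const (2 * c)).const_mul (4 / m)).sqrt
  rw [prod_atTop_atTop_eq] at hgap
  exact squeeze_zero (fun _ => dist_nonneg)
    (fun p => Real.le_sqrt_of_sq_le (strongConvexOn_sq_dist_le hJ hm hc _ _)) hgap

lemma strongConvexOn_exists_forall_le [CompleteSpace E] (hJ : StrongConvexOn univ m J)
    (hm : 0 < m) (hlsc : LowerSemicontinuous J) (hbdd : BddBelow (range J)) :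
    ∃ x, ∀ y, J x ≤ J y := by
  have hinf : ∀ z, sInf (range J) ≤ J z := fun z => csInf_le hbdd (mem_range_self z)
  obtain ⟨v, -, hv, hv_mem⟩ := exists_seq_tendsto_sInf (range_nonempty J) hbdd
  choose u hu using hv_mem
  obtain rfl : J ∘ u = v := funext hu
  obtain ⟨x, hx⟩ :=
    cauchySeq_tendsto_of_complete (strongConvexOn_cauchySeq_of_tendsto hJ hm hinf hv)
  refine ⟨x, fun y => le_trans ?_ (hinf y)⟩
  by_contra! hlt
  obtain ⟨c, hc, hcx⟩ := exists_between hlt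
  obtain ⟨n, hlarge, hsmall⟩ :=
    ((hx.eventually (hlsc x c hcx)).and (hv.eventually_lt_const hc)).exists
  exact hlarge.not_gt hsmall

lemma strongConvexOn_existsUnique_fderiv_eq_zero [CompleteSpace E] {dJ : E → E →L[ℝ] ℝ}
    (hJ : StrongConvexOn univ m J) (hm : 0 < m) (hdJ : ∀ x, HasFDerivAt J (dJ x) x) :
    ∃! x, dJ x = 0 := by
  have hcont : Continuous J := continuous_iff_continuousAt.2 fun x => (hdJ x).continuousAt
  obtain ⟨x, hx⟩ := strongConvexOn_exists_forall_le hJ hm hcont.lowerSemicontinuous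
    (strongConvexOn_bddBelow_range hJ hm (hdJ 0))
  refine ⟨x, IsLocalMin.hasFDerivAt_eq_zero (Eventually.of_forall hx) (hdJ x), fun y hy => ?_⟩
  exact (strongConvexOn_eq_of_hasFDerivAt_zero_of_le hJ hm (hy ▸ hdJ y) (hx y)).symm

lemma strongConvexOn_mul_sq_norm_le_fderiv_sub {Jx' Jy' : E →L[ℝ] ℝ} (hJ : StrongConvexOn s m J)
    (hx : x ∈ s) (hy : y ∈ s) (hJx : HasFDerivAt J Jx' x) (hJy : HasFDerivAt J Jy' y) :
    m * ‖y - x‖ ^ 2 ≤ (Jy' - Jx') (y - x) := by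
  have hxy := strongConvexOn_add_fderiv_add_le hJ hx hy hJx
  have hyx := strongConvexOn_add_fderiv_add_le hJ hy hx hJy
  rw [← neg_sub y x, map_neg, norm_neg] at hyx
  rw [_root_.sub_apply]
  linarith

lemma strongConvexOn_mul_sq_norm_le_hessian {dJ : E → E →L[ℝ] ℝ} {H : E →L[ℝ] E →L[ℝ] ℝ}
    (hJ : StrongConvexOn univ m J) (hdJ : ∀ y, HasFDerivAt J (dJ y) y) (hH : HasFDerivAt dJ H x)
    (v : E) : m * ‖v‖ ^ 2 ≤ H v v := by
  have hslope : Tendsto (fun t : ℝ => (t⁻¹ • (dJ (x + t • v) - dJ x)) v) (𝓝[>] 0)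
      (𝓝 (H v v)) :=
    ((ContinuousLinearMap.apply ℝ ℝ v).continuous.tendsto _).comp
      (hH.hasLineDerivAt v).tendsto_slope_zero_right
  refine ge_of_tendsto hslope ?_
  filter_upwards [self_mem_nhdsWithin] with t ht
  have hmono := strongConvexOn_mul_sq_norm_le_fderiv_sub hJ (mem_univ x) (mem_univ (x + t • v))
    (hdJ x) (hdJ (x + t • v))
  rw [add_sub_cancel_left, map_smul, norm_smul, mul_pow, Real.norm_eq_abs, sq_abs,
    smul_eq_mul] at hmono
  rw [_root_.smul_apply, smul_eq_mul, ← div_eq_inv_mul, le_div_iff₀ ht]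
  exact le_of_mul_le_mul_left (by linarith) (mem_Ioi.1 ht)

end StrongConvexity

section CoerciveForms

variable {E : Type*} [NormedAddCommGroup E] [NormedSpace ℝ E] {A : E →L[ℝ] E →L[ℝ] ℝ}

lemma hasFDerivAt_bilin_self_div_two (hsymm : ∀ v w, A v w = A w v) (v : E) :
    HasFDerivAt (fun w => A w w / 2) (A v) v := by
  have hA := (A.hasFDerivAt_of_bilinear (hasFDerivAt_id v) (hasFDerivAt_id v)).mul_const (2⁻¹ : ℝ)
  simp only [← div_eq_mul_inv] at hA
  refine hA.congr_fderiv (ContinuousLinearMap.ext fun w => ?_)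
  simp [hsymm w v, -smul_add, ← two_mul]

lemma analyticOnNhd_bilin_self_div_two (A : E →L[ℝ] E →L[ℝ] ℝ) :
    AnalyticOnNhd ℝ (fun v => A v v / 2) univ := fun v _ => by
  have hA : AnalyticAt ℝ (fun w => A w w) v :=
    (A.analyticAt_bilinear (v, v)).comp₂ analyticAt_id analyticAt_id
  exact hA.div_const

lemma bijective_of_symm_of_isCoercive [CompleteSpace E] (hsymm : ∀ v w, A v w = A w v)
    (hA : IsCoercive A) : Function.Bijective A := by
  obtain ⟨m, hm, hA⟩ := hA
  rw [Function.bijective_iff_existsUnique]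
  intro η
  have hconv : StrongConvexOn univ (1 * m) fun v => (-η) v + 1 * (A v v / 2) :=
    strongConvexOn_add_mul ((-η).toLinearMap.convexOn convex_univ)
      (strongConvexOn_bilin_self_div_two fun v => by simpa only [sq, ← mul_assoc] using hA v)
      zero_le_one
  have hderiv : ∀ v, HasFDerivAt (fun w => (-η) w + 1 * (A w w / 2)) (-η + (1 : ℝ) • A v) v :=
    fun v => (-η).hasFDerivAt.add ((hasFDerivAt_bilin_self_div_two hsymm v).const_mul 1)
  simpa only [one_smul, neg_add_eq_zero, eq_comm (a := η)] using
    strongConvexOn_existsUnique_fderiv_eq_zero hconv (by simpa using hm) hderiv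

lemma isInvertible_of_bijective {𝕜 X Y : Type*} [NontriviallyNormedField 𝕜]
    [NormedAddCommGroup X] [NormedSpace 𝕜 X] [CompleteSpace X]
    [NormedAddCommGroup Y] [NormedSpace 𝕜 Y] [CompleteSpace Y] {T : X →L[𝕜] Y}
    (hT : Function.Bijective T) : T.IsInvertible :=
  ⟨.ofBijective T (LinearMap.ker_eq_bot.2 hT.injective) (LinearMap.range_eq_top.2 hT.surjective),
    by ext; rfl⟩

lemma strongConvexOn_isInvertible_hessian [CompleteSpace E] {J : E → ℝ} {dJ : E → E →L[ℝ] ℝ}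
    {H : E →L[ℝ] E →L[ℝ] ℝ} {m : ℝ} {x : E} (hJ : StrongConvexOn univ m J) (hm : 0 < m)
    (hdJ : ∀ y, HasFDerivAt J (dJ y) y) (hH : HasFDerivAt dJ H x) : H.IsInvertible := by
  have hcoercive : IsCoercive H := ⟨m, hm, fun v => by
    simpa only [sq, ← mul_assoc] using strongConvexOn_mul_sq_norm_le_hessian hJ hdJ hH v⟩
  exact isInvertible_of_bijective
    (bijective_of_symm_of_isCoercive (second_derivative_symmetric hdJ hH) hcoercive)

end CoerciveForms

lemma analyticAt_of_eventually_unique_solution {𝕜 P X Y : Type*} [RCLike 𝕜]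
    [NormedAddCommGroup P] [NormedSpace 𝕜 P] [CompleteSpace P]
    [NormedAddCommGroup X] [NormedSpace 𝕜 X] [CompleteSpace X]
    [NormedAddCommGroup Y] [NormedSpace 𝕜 Y] [CompleteSpace Y]
    {G : P × X → Y} {u : P → X} {p : P} (hG : AnalyticAt 𝕜 G (p, u p))
    (hinv : (fderiv 𝕜 (fun x => G (p, x)) (u p)).IsInvertible)
    (huniq : ∀ᶠ q in 𝓝 p, ∀ x, G (q, x) = G (p, u p) → x = u q) : AnalyticAt 𝕜 u p := by
  have hpartial : HasFDerivAt (fun x => G (p, x))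
      (fderiv 𝕜 G (p, u p) ∘L .inr 𝕜 P X) (u p) :=
    hG.differentiableAt.hasFDerivAt.comp (u p) (hasFDerivAt_prodMk_right p (u p))
  rw [hpartial.fderiv] at hinv
  have hGω : ContDiffAt 𝕜 ω G (p, u p) := hG.contDiffAt
  refine (hGω.contDiffAt_implicitFunction (by simp) hinv).analyticAt.congr ?_
  filter_upwards [hGω.eventually_apply_implicitFunction (by simp) hinv, huniq] with q hq hq_uniq
  exact hq_uniq _ hq

section RegularizationPath

lemma analyticAt_of_eventually_hasFDerivAt {𝕜 X Y : Type*} [NontriviallyNormedField 𝕜]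
    [NormedAddCommGroup X] [NormedSpace 𝕜 X]
    [NormedAddCommGroup Y] [NormedSpace 𝕜 Y] [CompleteSpace Y]
    {h : X → Y} {dh : X → X →L[𝕜] Y} {x : X} (hh : AnalyticAt 𝕜 h x)
    (hdh : ∀ᶠ y in 𝓝 x, HasFDerivAt h (dh y) y) : AnalyticAt 𝕜 dh x :=
  hh.fderiv.congr (hdh.mono fun _ hy => hy.fderiv)

variable {E : Type*} [NormedAddCommGroup E] [NormedSpace ℝ E] [CompleteSpace E]
  {φ ψ : E → ℝ} {dφ dψ : E → E →L[ℝ] ℝ} {m : ℝ}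

lemma analyticOnNhd_of_fderiv_add_smul_fderiv_eq_zero (hφ : ConvexOn ℝ univ φ)
    (hψ : StrongConvexOn univ m ψ) (hm : 0 < m)
    (hφa : AnalyticOnNhd ℝ φ univ) (hψa : AnalyticOnNhd ℝ ψ univ)
    (hdφ : ∀ x, HasFDerivAt φ (dφ x) x) (hdψ : ∀ x, HasFDerivAt ψ (dψ x) x) {xh : ℝ → E}
    (hxh : ∀ l : ℝ, 0 < l → dφ (xh l) + l • dψ (xh l) = 0) : AnalyticOnNhd ℝ xh (Ioi 0) := by
  intro l (hl : 0 < l)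
  have hdJ : ∀ (k : ℝ) x, HasFDerivAt (fun y => φ y + k * ψ y) (dφ x + k • dψ x) x :=
    fun k x => (hdφ x).add ((hdψ x).const_mul k)
  have hdφa : AnalyticAt ℝ dφ (xh l) :=
    analyticAt_of_eventually_hasFDerivAt (hφa _ (mem_univ _)) (.of_forall hdφ)
  have hdψa : AnalyticAt ℝ dψ (xh l) :=
    analyticAt_of_eventually_hasFDerivAt (hψa _ (mem_univ _)) (.of_forall hdψ)
  have hHessian : DifferentiableAt ℝ (fun x => dφ x + l • dψ x) (xh l) :=
    hdφa.differentiableAt.add (hdψa.differentiableAt.const_smul l)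
  refine analyticAt_of_eventually_unique_solution (G := fun p : ℝ × E => dφ p.2 + p.1 • dψ p.2)
    ?_ ?_ ?_
  · exact (hdφa.comp_of_eq analyticAt_snd rfl).add
      (analyticAt_fst.smul (hdψa.comp_of_eq analyticAt_snd rfl))
  · exact strongConvexOn_isInvertible_hessian (strongConvexOn_add_mul hφ hψ hl.le)
      (mul_pos hl hm) (hdJ l) hHessian.hasFDerivAt
  · filter_upwards [lt_mem_nhds hl] with k hk x hx
    exact (strongConvexOn_existsUnique_fderiv_eq_zero (strongConvexOn_add_mul hφ hψ hk.le)
      (mul_pos hk hm) (hdJ k)).unique (hx.trans (hxh l hl)) (hxh k hk)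

theorem regularization_path_real_analytic_general
    {E' : Type*} [NormedAddCommGroup E'] [NormedSpace ℝ E'] (F : E →L[ℝ] E')
    {f : E → ℝ} {g : E' → ℝ} {df : E → E →L[ℝ] ℝ} {dg : E' → E' →L[ℝ] ℝ}
    (hf : ConvexOn ℝ univ f) (hg : ConvexOn ℝ univ g) (hψ : StrongConvexOn univ m ψ) (hm : 0 < m)
    (hfa : AnalyticOnNhd ℝ f univ) (hga : AnalyticOnNhd ℝ g univ) (hψa : AnalyticOnNhd ℝ ψ univ)
    (hdf : ∀ x, HasFDerivAt f (df x) x) (hdg : ∀ z, HasFDerivAt g (dg z) z)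
    (hdψ : ∀ x, HasFDerivAt ψ (dψ x) x) :
    ∃ xh : ℝ → E,
      (∀ l : ℝ, 0 < l →
        dg (F (xh l)) ∘L F + df (xh l) + l • dψ (xh l) = 0 ∧
        (∀ x, g (F (xh l)) + f (xh l) + l * ψ (xh l) ≤ g (F x) + f x + l * ψ x) ∧
        (∀ x, g (F x) + f x + l * ψ x ≤ g (F (xh l)) + f (xh l) + l * ψ (xh l) → x = xh l)) ∧
      AnalyticOnNhd ℝ xh (Ioi 0) ∧
      (∀ xh' : ℝ → E,
        (∀ l : ℝ, 0 < l → dg (F (xh' l)) ∘L F + df (xh' l) + l • dψ (xh' l) = 0) →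
        ∀ l : ℝ, 0 < l → xh' l = xh l) := by
  have hφ : ConvexOn ℝ univ fun x => g (F x) + f x := (hg.comp_linearMap F.toLinearMap).add hf
  have hφa : AnalyticOnNhd ℝ (fun x => g (F x) + f x) univ := fun x _ =>
    ((hga (F x) (mem_univ _)).comp (F.analyticAt x)).add (hfa x (mem_univ _))
  have hdφ : ∀ x, HasFDerivAt (fun x => g (F x) + f x) (dg (F x) ∘L F + df x) x := fun x =>
    ((hdg (F x)).comp x F.hasFDerivAt).add (hdf x)
  have hJ : ∀ l : ℝ, 0 < l → StrongConvexOn univ (l * m) fun x => g (F x) + f x + l * ψ x :=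
    fun l hl => strongConvexOn_add_mul hφ hψ hl.le
  have hdJ : ∀ (l : ℝ) x, HasFDerivAt (fun y => g (F y) + f y + l * ψ y)
      (dg (F x) ∘L F + df x + l • dψ x) x :=
    fun l x => (hdφ x).add ((hdψ x).const_mul l)
  have hcritical : ∀ l : ℝ, 0 < l → ∃! x, dg (F x) ∘L F + df x + l • dψ x = 0 :=
    fun l hl => strongConvexOn_existsUnique_fderiv_eq_zero (hJ l hl) (mul_pos hl hm) (hdJ l)
  choose! xh hxh hxh_unique using hcritical
  have hdJ_zero : ∀ l : ℝ, 0 < l →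
      HasFDerivAt (fun y => g (F y) + f y + l * ψ y) (0 : E →L[ℝ] ℝ) (xh l) :=
    fun l hl => hxh l hl ▸ hdJ l (xh l)
  exact ⟨xh, fun l hl => ⟨hxh l hl,
      strongConvexOn_le_of_hasFDerivAt_zero (hJ l hl) (mul_pos hl hm).le (hdJ_zero l hl),
      fun _ => strongConvexOn_eq_of_hasFDerivAt_zero_of_le (hJ l hl) (mul_pos hl hm)
        (hdJ_zero l hl)⟩,
    analyticOnNhd_of_fderiv_add_smul_fderiv_eq_zero hφ hψ hm hφa hψa hdφ hdψ hxh,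
    fun _ hxh' l hl => hxh_unique l hl _ (hxh' l hl)⟩

end RegularizationPath

section DotProduct

variable {n p : Type*} [Fintype n] [Fintype p]

/-- The dot product on `n → ℝ` as a continuous bilinear form; `dotForm n y` is the derivative
represented by the gradient `y`. -/
noncomputable def dotForm (n : Type*) [Fintype n] : (n → ℝ) →L[ℝ] (n → ℝ) →L[ℝ] ℝ :=
  (dotProductBilin ℝ ℝ).toContinuousBilinearMap

lemma dotForm_apply (x y : n → ℝ) : dotForm n x y = x ⬝ᵥ y := rfl

lemma dotForm_injective : Function.Injective (dotForm n) := fun x y hxy =>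
  dotProduct_eq x y fun v => DFunLike.congr_fun hxy v

lemma dotForm_eq_sum_smul_proj (y : n → ℝ) :
    dotForm n y = ∑ i, y i • (ContinuousLinearMap.proj i : (n → ℝ) →L[ℝ] ℝ) := by
  ext v
  simp [dotForm_apply, dotProduct]

lemma dotForm_comp_mulVecLin (F : Matrix p n ℝ) (y : p → ℝ) :
    dotForm p y ∘L F.mulVecLin.toContinuousLinearMap = dotForm n (Fᵀ *ᵥ y) := by
  ext v
  simp [dotForm_apply, mulVec_transpose, dotProduct_mulVec]

lemma sq_norm_le_dotForm_self (v : n → ℝ) : ‖v‖ ^ 2 ≤ dotForm n v v := by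
  have hcoord : ∀ i, v i ^ 2 ≤ v ⬝ᵥ v := fun i => by
    rw [sq]
    exact Finset.single_le_sum (f := fun i => v i * v i) (fun i _ => mul_self_nonneg (v i))
      (Finset.mem_univ i)
  have hnonneg : 0 ≤ v ⬝ᵥ v := Finset.sum_nonneg fun i _ => mul_self_nonneg (v i)
  rw [dotForm_apply, ← Real.le_sqrt (norm_nonneg v) hnonneg,
    pi_norm_le_iff_of_nonneg (Real.sqrt_nonneg _)]
  exact fun i => Real.abs_le_sqrt (hcoord i)

end DotProduct

/-- Analyticity of the ridge regularization path. For `F ∈ ℝ^{M×N}` and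
convex real analytic `f`, `g` (with gradients `df`, `dg`), there is a unique map
`λ₂ ↦ x̂(λ₂)` on `(0,∞)` solving the first-order condition
`Fᵀ∇g(F x̂(λ₂)) + ∇f(x̂(λ₂)) + λ₂ x̂(λ₂) = 0`; moreover `x̂(λ₂)` is the unique minimizer of
`x ↦ g(Fx) + f(x) + (λ₂/2)‖x‖²` and each coordinate `λ₂ ↦ x̂(λ₂)ᵢ` is real analytic on
`(0,∞)`. -/
theorem regularization_path_real_analytic
    (M N : ℕ) (F : Matrix (Fin M) (Fin N) ℝ)
    (f : (Fin N → ℝ) → ℝ) (g : (Fin M → ℝ) → ℝ)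
    (hf : ConvexOn ℝ Set.univ f) (hg : ConvexOn ℝ Set.univ g)
    (hfa : AnalyticOnNhd ℝ f Set.univ) (hga : AnalyticOnNhd ℝ g Set.univ)
    (df : (Fin N → ℝ) → Fin N → ℝ) (dg : (Fin M → ℝ) → Fin M → ℝ)
    (hdf : ∀ x : Fin N → ℝ, HasFDerivAt f
      (∑ i, df x i • (ContinuousLinearMap.proj i : (Fin N → ℝ) →L[ℝ] ℝ)) x)
    (hdg : ∀ z : Fin M → ℝ, HasFDerivAt g
      (∑ j, dg z j • (ContinuousLinearMap.proj j : (Fin M → ℝ) →L[ℝ] ℝ)) z) :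
    ∃ xh : ℝ → Fin N → ℝ,
      (∀ l2 : ℝ, 0 < l2 →
        (Fᵀ.mulVec (dg (F.mulVec (xh l2))) + df (xh l2) + l2 • xh l2 = 0) ∧
        (∀ x : Fin N → ℝ,
          g (F.mulVec (xh l2)) + f (xh l2) + l2 / 2 * (xh l2 ⬝ᵥ xh l2)
            ≤ g (F.mulVec x) + f x + l2 / 2 * (x ⬝ᵥ x)) ∧
        (∀ x : Fin N → ℝ,
          (g (F.mulVec x) + f x + l2 / 2 * (x ⬝ᵥ x)
            ≤ g (F.mulVec (xh l2)) + f (xh l2) + l2 / 2 * (xh l2 ⬝ᵥ xh l2)) → x = xh l2)) ∧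
      (∀ i : Fin N, AnalyticOnNhd ℝ (fun l2 : ℝ => xh l2 i) (Set.Ioi 0)) ∧
      (∀ xh' : ℝ → Fin N → ℝ,
        (∀ l2 : ℝ, 0 < l2 →
          Fᵀ.mulVec (dg (F.mulVec (xh' l2))) + df (xh' l2) + l2 • xh' l2 = 0) →
        ∀ l2 : ℝ, 0 < l2 → xh' l2 = xh l2) := by
  simp only [← dotForm_eq_sum_smul_proj] at hdf hdg
  obtain ⟨xh, hxh, hxh_analytic, hxh_unique⟩ :=
    regularization_path_real_analytic_general F.mulVecLin.toContinuousLinearMap hf hg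
      (strongConvexOn_bilin_self_div_two (A := dotForm (Fin N)) (m := 1)
        fun v => by simpa using sq_norm_le_dotForm_self v)
      one_pos hfa hga (analyticOnNhd_bilin_self_div_two _) hdf hdg
      (hasFDerivAt_bilin_self_div_two dotProduct_comm)
  simp only [dotForm_comp_mulVecLin, ← map_smul, ← map_add, map_eq_zero_iff _ dotForm_injective,
    dotForm_apply, ← mul_div_assoc, ← div_mul_eq_mul_div] at hxh hxh_unique
  exact ⟨xh, hxh, fun i l hl => analyticAt_pi_iff.1 (hxh_analytic l hl) i, hxh_unique⟩
end
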